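/- arXiv:1203.0686 — 9 statements merged into one kernel-verified Lean document; each statement's English description precedes it below -/
import Mathlib

section
/- For every real number r there exists a separable metric space X with Hausdorff dimension at least r such that no uniformly continuous function f : X → ℝ has image equal to a non-degenerate closed interval [a,b] (a < b). -/
open scoped ENNReal

section Aux

open Cardinal

/-- Guessing hypothesis. -/
def Guess : Prop := ∀ (ι : Type) (Φ : ι → ℕ → ℕ), #ι < 𝔠 → ∃ g : ℕ → ℕ, ∀ i, ∃ n, Φ i n = g n

theorem Guess.dep (H : Guess) (ι : Type) (hι : #ι < 𝔠) (β : ℕ → Type) [∀ n, Countable (β n)]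
    [∀ n, Nonempty (β n)] (Φ : ι → ∀ n, β n) : ∃ g : ∀ n, β n, ∀ i, ∃ n, Φ i n = g n := by
  have h : ∀ n, ∃ e : β n → ℕ, Function.Injective e := fun n => Countable.exists_injective_nat _
  choose e he using h
  obtain ⟨g, hg⟩ := H ι (fun i n => e n (Φ i n)) hι
  refine ⟨fun n => Function.invFun (e n) (g n), fun i => ?_⟩
  obtain ⟨n, hn⟩ := hg i
  refine ⟨n, ?_⟩
  simp only [← hn]
  exact (Function.leftInverse_invFun (he n) _).symm

theorem mul_aleph0_lt {ι : Type} (hι : #ι < 𝔠) : #(ι × ℕ) < 𝔠 := by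
  rw [mk_prod, lift_id, lift_id]
  exact mul_lt_of_lt aleph0_le_continuum hι (by simpa using aleph0_lt_continuum)

/-- Interval partition capturing all the functions infinitely often. -/
theorem Guess.partition (H : Guess) (ι : Type) (hι : #ι < 𝔠) (φ : ι → ℕ → ℕ)
    (hmono : ∀ i, Monotone (φ i)) :
    ∃ m : ℕ → ℕ, StrictMono m ∧ m 0 = 0 ∧ ∀ i, ∀ N, ∃ n, N ≤ n ∧ φ i (m n) ≤ m (n + 1) := by
  obtain ⟨ψ, hψ⟩ := H (ι × ℕ) (fun p n => φ p.1 (φ p.1 n) + p.2) (mul_aleph0_lt hι)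
  let Ψ : ℕ → ℕ := fun n => ∑ k ∈ Finset.range (n + 1), ψ k
  have hΨ : ∀ a b, a ≤ b → ψ a ≤ Ψ b := fun a b hab =>
    Finset.single_le_sum (f := ψ) (fun _ _ => Nat.zero_le _) (Finset.mem_range.2 (by omega))
  let m : ℕ → ℕ := fun n => Nat.rec 0 (fun _ x => x + 1 + Ψ x) n
  have hm1 : ∀ n, m (n + 1) = m n + 1 + Ψ (m n) := fun n => rfl
  have hm : StrictMono m := strictMono_nat_of_lt_succ (fun n => by rw [hm1]; omega)
  have hm0 : m 0 = 0 := rfl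
  clear_value m
  refine ⟨m, hm, hm0, fun i N => ?_⟩
  obtain ⟨x, hx⟩ := hψ (i, Ψ (m (N + 1)) + 1)
  simp only at hx
  have hxN : m (N + 1) < x := by
    by_contra hc
    have := hΨ x (m (N + 1)) (by omega)
    omega
  have hex : ∃ n, x < m n := ⟨x + 1, lt_of_lt_of_le (Nat.lt_succ_self x) hm.le_apply⟩
  classical
  have h0 : Nat.find hex ≠ 0 := by
    intro h0
    have := Nat.find_spec hex
    rw [h0, hm0] at this
    exact absurd this (Nat.not_lt_zero _)
  obtain ⟨n, hn⟩ := Nat.exists_eq_succ_of_ne_zero h0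
  have h1 : x < m (n + 1) := by have := Nat.find_spec hex; rwa [hn] at this
  have h2 : m n ≤ x := by
    have := Nat.find_min hex (m := n) (by omega)
    omega
  have hNn : N ≤ n := by
    have : m (N + 1) < m (n + 1) := by omega
    have := hm.lt_iff_lt.1 this
    omega
  by_cases h3 : φ i (m n) ≤ m (n + 1)
  · exact ⟨n, hNn, h3⟩
  · refine ⟨n + 1, by omega, ?_⟩
    have a1 := hΨ x (m (n + 1)) h1.le
    have a2 := hm1 (n + 1)
    have a3 : φ i (m (n + 1)) ≤ φ i (φ i x) :=
      hmono i ((not_le.1 h3).le.trans (hmono i h2))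
    omega

theorem exists_rec (Ψ : ∀ q : ℕ, (Fin q → Bool) → Bool) :
    ∃ z : ℕ → Bool, ∀ q, z q = Ψ q (fun p => z p) := by
  let z : ℕ → Bool := fun q => Nat.strongRecOn q (fun q ih => Ψ q (fun p => ih p.1 p.2))
  refine ⟨z, fun q => ?_⟩
  simp only [z]
  rw [Nat.strongRecOn_eq]

theorem exists_glue {B : ℕ → Type} [∀ n, Nonempty (B n)] (s : ℕ → Σ n, B n)
    (hs : Function.Injective (fun j => (s j).1)) :
    ∃ V : ∀ n, B n, ∀ j, V (s j).1 = (s j).2 := by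
  classical
  have : ∀ n, ∃ v : B n, ∀ j, ∀ h : (s j).1 = n, v = h ▸ (s j).2 := by
    intro n
    by_cases h : ∃ j, (s j).1 = n
    · obtain ⟨j, rfl⟩ := h
      refine ⟨(s j).2, fun j' h' => ?_⟩
      obtain rfl := hs h'
      rfl
    · exact ⟨Classical.arbitrary _, fun j hj => (h ⟨j, hj⟩).elim⟩
  choose V hV using this
  exact ⟨V, fun j => hV _ j rfl⟩

theorem exists_pick {B : ℕ → Type} [∀ n, Nonempty (B n)] (G : ∀ j : ℕ, Fin (j + 1) → Σ n, B n) :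
    ∃ V : ∀ n, B n, ∀ j, Function.Injective (fun l => (G j l).1) →
      ∃ l, V (G j l).1 = (G j l).2 := by
  classical
  let D : ∀ j : ℕ, Fin (j + 1) → Σ n, B n := fun j l => ⟨l, Classical.arbitrary _⟩
  let G' : ∀ j : ℕ, Fin (j + 1) → Σ n, B n := fun j =>
    if Function.Injective (fun l => (G j l).1) then G j else D j
  have hG' : ∀ j, Function.Injective (fun l => (G' j l).1) := by
    intro j
    by_cases h : Function.Injective (fun l => (G j l).1)
    · simp only [G', if_pos h]; exact h
    · simp only [G', if_neg h]; exact Fin.val_injective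
  have hall := (Finset.all_card_le_biUnion_card_iff_exists_injective
    (fun j : ℕ => Finset.univ.image (fun l => (G' j l).1))).1 (by
      intro s
      rcases s.eq_empty_or_nonempty with rfl | hne
      · simp
      · have h1 : s ⊆ Finset.range (s.max' hne + 1) := fun a ha =>
          Finset.mem_range.2 (Nat.lt_succ_of_le (s.le_max' a ha))
        have h2 := Finset.card_le_card h1
        have h3 := Finset.card_le_card (Finset.subset_biUnion_of_mem
          (fun j : ℕ => Finset.univ.image (fun l => (G' j l).1)) (s.max'_mem hne))
        rw [Finset.card_image_of_injective _ (hG' _)] at h3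
        simp only [Finset.card_range, Finset.card_univ, Fintype.card_fin] at h2 h3
        omega)
  obtain ⟨f, hf, hfm⟩ := hall
  have : ∀ j, ∃ l, (G' j l).1 = f j := fun j => by simpa using hfm j
  choose l hl using this
  obtain ⟨V, hV⟩ := exists_glue (fun j => G' j (l j)) (by
    intro a b hab
    simp only [hl] at hab
    exact hf hab)
  refine ⟨V, fun j hj => ⟨l j, ?_⟩⟩
  have e : G' j = G j := if_pos hj
  have := hV j
  rwa [e] at this

/-- Fewer than continuum many dense open subsets of Cantor space have a common point. -/
theorem Guess.cov (H : Guess) (ι : Type) (hι : #ι < 𝔠) (D : ι → Set (ℕ → Bool))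
    (hD : ∀ i (z : ℕ → Bool) (n : ℕ), ∃ x : ℕ → Bool, (∀ q < n, x q = z q) ∧
      ∃ M : ℕ, ∀ x' : ℕ → Bool, (∀ q < M, x' q = x q) → x' ∈ D i) :
    ∃ z, ∀ i, z ∈ D i := by
  have h1 : ∀ i m, ∃ M : ℕ, ∀ w : Fin m → Bool, ∃ x : ℕ → Bool, (∀ q : Fin m, x q = w q) ∧
      ∀ x' : ℕ → Bool, (∀ q < M, x' q = x q) → x' ∈ D i := by
    intro i m
    have : ∀ w : Fin m → Bool, ∃ x : ℕ → Bool, (∀ q : Fin m, x q = w q) ∧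
      ∃ M : ℕ, ∀ x' : ℕ → Bool, (∀ q < M, x' q = x q) → x' ∈ D i := by
      intro w
      obtain ⟨x, hx, hM⟩ := hD i (fun q => if h : q < m then w ⟨q, h⟩ else false) m
      refine ⟨x, fun q => ?_, hM⟩
      rw [hx q q.2]; simp
    choose x hx M hM using this
    refine ⟨∑ w, M w, fun w => ⟨x w, hx w, fun x' hx' => hM w x' fun q hq => hx' q ?_⟩⟩
    exact hq.trans_le (Finset.single_le_sum (f := M) (fun _ _ => Nat.zero_le _) (Finset.mem_univ w))
  choose M hM using h1
  obtain ⟨m, hm, hm0, hcap⟩ := H.partition ι hι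
    (fun i n => ∑ k ∈ Finset.range (n + 1), M i k) (by
      intro i a b hab
      exact Finset.sum_le_sum_of_subset (Finset.range_mono (by omega)))
  let B : ℕ → Type := fun n => (Fin (m n) → Bool) → (Fin (m (n + 1)) → Bool)
  have hBc : ∀ n, Finite (B n) := fun n => by dsimp only [B]; infer_instance
  have hBn : ∀ n, Nonempty (B n) := fun n => by dsimp only [B]; infer_instance
  let Good : ι → ∀ n, B n → Prop := fun i n u => ∀ x : ℕ → Bool,
    (∀ q : Fin (m (n + 1)), m n ≤ q → x q = u (fun p => x p) q) → x ∈ D i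
  have h2 : ∀ i N, ∃ n, N ≤ n ∧ ∃ u, Good i n u := by
    intro i N
    obtain ⟨n, hn, hle⟩ := hcap i N
    refine ⟨n, hn, ?_⟩
    choose x hx hx' using hM i (m n)
    refine ⟨fun w q => x w q, fun y hy => hx' (fun p => y p) y fun q hq => ?_⟩
    by_cases hqm : q < m n
    · exact (hx (fun p => y p) ⟨q, hqm⟩).symm
    · refine hy ⟨q, ?_⟩ (not_lt.1 hqm)
      refine hq.trans_le (le_trans ?_ hle)
      exact Finset.single_le_sum (f := M i) (fun _ _ => Nat.zero_le _)
        (Finset.mem_range.2 (Nat.lt_succ_self _))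
  have h3 : ∀ i, ∃ a : ℕ → ℕ, StrictMono a ∧ ∀ l, ∃ u, Good i (a l) u := fun i =>
    Filter.extraction_of_frequently_atTop (Filter.frequently_atTop.2 (h2 i))
  choose a ha u hu using h3
  obtain ⟨G, hG⟩ := H.dep ι hι (fun j => Fin (j + 1) → Σ n, B n)
    (fun i j l => ⟨a i l, u i l⟩)
  obtain ⟨V, hV⟩ := exists_pick G
  have hblock : ∀ q, ∃ n, m n ≤ q ∧ q < m (n + 1) := by
    intro q
    induction q with
    | zero => exact ⟨0, hm0.le, by have := hm (show 0 < 0 + 1 by omega); omega⟩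
    | succ q ih =>
      obtain ⟨n, h1, h2⟩ := ih
      by_cases h : q + 1 < m (n + 1)
      · exact ⟨n, by omega, h⟩
      · exact ⟨n + 1, by omega, by have := hm (show n + 1 < n + 1 + 1 by omega); omega⟩
  choose b hb1 hb2 using hblock
  have hb : ∀ n q, m n ≤ q → q < m (n + 1) → b q = n := by
    intro n q h1 h2
    have e1 := hm.lt_iff_lt.1 (lt_of_le_of_lt (hb1 q) h2)
    have e2 := hm.lt_iff_lt.1 (lt_of_le_of_lt h1 (hb2 q))
    omega
  obtain ⟨z, hz⟩ := exists_rec (fun q w => V (b q) (fun p => w ⟨p, p.2.trans_le (hb1 q)⟩) ⟨q, hb2 q⟩)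
  have hz' : ∀ n (q : Fin (m (n + 1))), m n ≤ q → z q = V n (fun p => z p) q := by
    rintro n ⟨q, hq'⟩ hq
    obtain rfl := hb n q hq hq'
    exact hz q
  refine ⟨z, fun i => ?_⟩
  obtain ⟨j, hj⟩ := hG i
  obtain ⟨l, hl⟩ := hV j (by
    rw [← hj]
    intro l l' h
    exact Fin.val_injective ((ha i).injective h))
  rw [← hj] at hl
  refine hu i l z fun q hq => ?_
  have hl' : V (a i l) = u i l := hl
  rw [← hl']
  exact hz' _ q hq

def pick (c : ℕ) (b : Bool) : ℕ :=
  if b then (if c = 0 then 1 else 0) else (if c = 2 then 1 else 2)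

theorem pick_ne (c : ℕ) (b : Bool) : pick c b ≠ c := by
  unfold pick; split_ifs <;> omega

theorem pick_meet (c d : ℕ) : ∃ a b, pick c a = pick d b := by
  by_contra! h
  have h1 := h true true
  have h2 := h true false
  have h3 := h false true
  have h4 := h false false
  simp only [pick] at h1 h2 h3 h4
  simp at h1 h2 h3 h4
  split_ifs at h1 h2 h3 h4 <;> omega

def pickSeq (g : ℕ → ℕ) (z : ℕ → Bool) : ℕ → ℕ := fun n => pick (g n) (z n)

theorem continuous_pickSeq (g : ℕ → ℕ) : Continuous (pickSeq g) := by
  refine continuous_pi fun n => ?_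
  exact (continuous_of_discreteTopology (f := pick (g n))).comp (continuous_apply n)

def Bad (h : (ℕ → ℕ) → ℝ) (y : ℝ) : Prop :=
  ∃ (g : ℕ → ℕ) (z : ℕ → Bool) (n : ℕ), ∀ z' : ℕ → Bool, (∀ q < n, z' q = z q) →
    h (pickSeq g z') = y

theorem countable_bad (h : (ℕ → ℕ) → ℝ) : {y | Bad h y}.Countable := by
  have : {y | Bad h y} ⊆ ⋃ (s : Σ n : ℕ, (Fin n → ℕ)), {y | ∃ (g : ℕ → ℕ) (z : ℕ → Bool),
      (∀ q : Fin s.1, pickSeq g z q = s.2 q) ∧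
      ∀ z' : ℕ → Bool, (∀ q < s.1, z' q = z q) → h (pickSeq g z') = y} := by
    rintro y ⟨g, z, n, hy⟩
    exact Set.mem_iUnion.2 ⟨⟨n, fun q => pickSeq g z q⟩, g, z, fun _ => rfl, hy⟩
  refine Set.Countable.mono this (Set.countable_iUnion fun s => Set.Subsingleton.countable ?_)
  rintro y ⟨g, z, h1, h2⟩ y' ⟨g', z', h1', h2'⟩
  have : ∀ n, ∃ a b, pick (g n) a = pick (g' n) b ∧ (n < s.1 → a = z n ∧ b = z' n) := by
    intro n
    by_cases hn : n < s.1
    · exact ⟨z n, z' n, (h1 ⟨n, hn⟩).trans (h1' ⟨n, hn⟩).symm, fun _ => ⟨rfl, rfl⟩⟩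
    · obtain ⟨a, b, hab⟩ := pick_meet (g n) (g' n)
      exact ⟨a, b, hab, fun h => (hn h).elim⟩
  choose a b hab hab' using this
  rw [← h2 a (fun q hq => (hab' q hq).1), ← h2' b (fun q hq => (hab' q hq).2)]
  congr 1
  funext n
  exact hab n

theorem exists_extend {E : Type} [MetricSpace E] (S : Set E) (f : S → ℝ)
    (hf : UniformContinuous f) : ∃ F : C(E, ℝ), ∀ x : S, F x = f x := by
  let i : S → closure S := Set.inclusion subset_closure
  have hi : IsUniformInducing i := (isUniformEmbedding_set_inclusion subset_closure).isUniformInducing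
  have hd : DenseRange i := (denseRange_inclusion_iff subset_closure).2 subset_rfl
  have hid : IsDenseInducing i := hi.isDenseInducing hd
  have hu : UniformContinuous (hid.extend f) := uniformContinuous_uniformly_extend hi hd hf
  obtain ⟨F, hF⟩ := ContinuousMap.exists_restrict_eq (isClosed_closure (s := S))
    ⟨hid.extend f, hu.continuous⟩
  refine ⟨F, fun x => ?_⟩
  have h1 : F.restrict (closure S) (i x) = hid.extend f (i x) := by rw [hF]; rfl
  have h2 : hid.extend f (i x) = f x := hid.extend_eq hf.continuous x
  rw [← h2, ← h1]
  rfl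

theorem mk_cont_le {E : Type} [MetricSpace E] [SecondCountableTopology E] : #C(E, ℝ) ≤ 𝔠 := by
  obtain ⟨s, hs, hd⟩ := TopologicalSpace.exists_countable_dense E
  have : Function.Injective (fun (F : C(E, ℝ)) (x : s) => F x) := by
    intro F G h
    ext x
    have := Continuous.ext_on hd F.continuous G.continuous (fun x hx => congrFun h ⟨x, hx⟩)
    exact congrFun this x
  refine (mk_le_of_injective this).trans ?_
  have hs' : #s ≤ ℵ₀ := by
    have := hs.to_subtype
    exact mk_le_aleph0
  rw [← power_def, mk_real]
  calc 𝔠 ^ #s ≤ 𝔠 ^ ℵ₀ := power_le_power_left continuum_ne_zero hs'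
    _ = 𝔠 := continuum_power_aleph0

theorem main_abs {E : Type} [MetricSpace E] [SecondCountableTopology E] (θ : (ℕ → ℕ) → E)
    (hθ : Continuous θ) (r : ENNReal)
    (hdim : ∀ X : Set (ℕ → ℕ), (∀ g : ℕ → ℕ, ∃ x ∈ X, ∀ n, x n ≠ g n) → r ≤ dimH (θ '' X)) :
    ∃ S : Set E, r ≤ dimH S ∧ ∀ f : S → ℝ, UniformContinuous f →
      ∀ a b : ℝ, a < b → Set.range f ≠ Set.Icc a b := by
  by_cases H : Guess
  swap
  · unfold Guess at H
    push Not at H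
    obtain ⟨ι, Φ, hι, hΦ⟩ := H
    refine ⟨θ '' Set.range Φ, hdim _ fun g => ?_, fun f _ a b hab hr => ?_⟩
    · obtain ⟨i, hi⟩ := hΦ g
      exact ⟨Φ i, ⟨i, rfl⟩, hi⟩
    · have h1 : #(Set.range f) < 𝔠 :=
        (mk_range_le.trans (mk_image_le.trans mk_range_le)).trans_lt hι
      rw [hr, mk_Icc_real hab] at h1
      exact lt_irrefl _ h1
  -- the index set
  let I : Type := C(E, ℝ) × {p : ℝ × ℝ // p.1 < p.2} × (ℕ → ℕ)
  let J : Type := (Cardinal.ord 𝔠).ToType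
  have hJ : #J = 𝔠 := mk_ord_toType _
  have hI : #I ≤ #J := by
    have h2 : #{p : ℝ × ℝ // p.1 < p.2} ≤ 𝔠 := by
      refine (mk_subtype_le _).trans ?_
      simp [mk_real]
    have h3 : #(ℕ → ℕ) ≤ 𝔠 := by simp
    rw [hJ]
    simp only [I, mk_prod, lift_id]
    calc _ ≤ 𝔠 * (𝔠 * 𝔠) := mul_le_mul' mk_cont_le (mul_le_mul' h2 h3)
      _ = 𝔠 := by simp
  obtain ⟨emb⟩ := Cardinal.le_def _ _ |>.1 hI
  have : Nonempty I := ⟨(0, ⟨(0, 1), by norm_num⟩, 0)⟩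
  obtain ⟨e, he⟩ : ∃ e : J → I, Function.Surjective e :=
    ⟨Function.invFun emb, Function.invFun_surjective emb.injective⟩
  have hlt : ∀ α : J, #(Set.Iio α) < 𝔠 := fun α => by
    have := mk_Iio_lt α (by simp [J])
    rwa [hJ] at this
  let V : J → Type := fun α => (ℕ → Bool) × {y : ℝ // y ∈ Set.Icc (e α).2.1.1.1 (e α).2.1.1.2 ∧
    ¬ Bad (fun x => (e α).1 (θ x)) y}
  let pt : ∀ α, V α → E := fun α p => θ (pickSeq (e α).2.2 p.1)
  have step : ∀ (α : J) (prev : ∀ β, β < α → V β), ∃ p : V α,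
      (∀ β (h : β < α), (e α).1 (pt β (prev β h)) ≠ p.2.1) ∧
      (∀ β (h : β < α), (e β).1 (pt α p) ≠ (prev β h).2.1) ∧ (e α).1 (pt α p) ≠ p.2.1 := by
    intro α prev
    obtain ⟨y, hyI, hyB, hy⟩ : ∃ y ∈ Set.Icc (e α).2.1.1.1 (e α).2.1.1.2,
        ¬ Bad (fun x => (e α).1 (θ x)) y ∧
        ∀ β (h : β < α), (e α).1 (pt β (prev β h)) ≠ y := by
      by_contra! hcon
      have hsub : Set.Icc (e α).2.1.1.1 (e α).2.1.1.2 ⊆ {y | Bad (fun x => (e α).1 (θ x)) y} ∪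
          Set.range (fun β : Set.Iio α => (e α).1 (pt β (prev β β.2))) := by
        intro y hy
        by_cases hB : Bad (fun x => (e α).1 (θ x)) y
        · exact Or.inl hB
        · obtain ⟨β, h, hβ⟩ := hcon y hy hB
          exact Or.inr ⟨⟨β, h⟩, hβ⟩
      have h1 := (mk_le_mk_of_subset hsub).trans (mk_union_le _ _)
      rw [mk_Icc_real (e α).2.1.2] at h1
      refine absurd h1 (not_le.2 ?_)
      refine add_lt_of_lt aleph0_le_continuum ?_ (mk_range_le.trans_lt (hlt α))
      refine lt_of_le_of_lt ?_ aleph0_lt_continuum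
      have := (countable_bad (fun x => (e α).1 (θ x))).to_subtype
      exact mk_le_aleph0
    -- all the constraints
    let F : Option (Set.Iio α) → C(E, ℝ) := fun o => o.elim (e α).1 (fun β => (e β).1)
    let Y : Option (Set.Iio α) → ℝ := fun o => o.elim y (fun β => (prev β β.2).2.1)
    have hFY : ∀ o, ¬ Bad (fun x => F o (θ x)) (Y o) := by
      rintro (_ | β)
      · exact hyB
      · exact (prev β β.2).2.2.2
    obtain ⟨z, hz⟩ := H.cov (Option (Set.Iio α)) (by
        rw [mk_option]
        exact add_lt_of_lt aleph0_le_continuum (hlt α)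
          (one_lt_aleph0.trans aleph0_lt_continuum))
      (fun o => {z | F o (θ (pickSeq (e α).2.2 z)) ≠ Y o}) (by
        intro o z n
        have h1 := hFY o
        simp only [Bad] at h1
        push Not at h1
        obtain ⟨x, hx, hne⟩ := h1 (e α).2.2 z n
        refine ⟨x, hx, ?_⟩
        have hopen : IsOpen {z | F o (θ (pickSeq (e α).2.2 z)) ≠ Y o} :=
          isOpen_ne_fun ((F o).continuous.comp (hθ.comp (continuous_pickSeq _))) continuous_const
        obtain ⟨u, ⟨w, M, rfl⟩, hxu, hu⟩ :=
          (PiNat.isTopologicalBasis_cylinders (E := fun _ => Bool)).exists_subset_of_mem_open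
            (show x ∈ _ from hne) hopen
        refine ⟨M, fun x' hx' => hu ?_⟩
        intro q hq
        exact (hx' q hq).trans (hxu q hq))
    refine ⟨(z, ⟨y, hyI, hyB⟩), hy, fun β h => hz (some ⟨β, h⟩), hz none⟩
  choose nxt hn1 hn2 hn3 using step
  let v : ∀ α, V α := fun α => (wellFounded_lt (α := J)).fix nxt α
  have hv : ∀ α, v α = nxt α (fun β _ => v β) := fun α => WellFounded.fix_eq _ _ _
  have hne : ∀ α β, (e α).1 (pt β (v β)) ≠ (v α).2.1 := by
    intro α β
    rcases lt_trichotomy α β with h | h | h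
    · have := hn2 β (fun β _ => v β) α h
      rwa [← hv] at this
    · subst h
      have := hn3 α (fun β _ => v β)
      rwa [← hv] at this
    · have := hn1 α (fun β _ => v β) β h
      rwa [← hv] at this
  refine ⟨θ '' Set.range (fun α => pickSeq (e α).2.2 (v α).1), hdim _ fun g => ?_, ?_⟩
  · obtain ⟨α, hα⟩ := he (0, ⟨(0, 1), by norm_num⟩, g)
    refine ⟨_, ⟨α, rfl⟩, fun n => ?_⟩
    simp only [hα]
    exact pick_ne _ _
  · intro f hf a b hab hr
    obtain ⟨F, hF⟩ := exists_extend _ f hf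
    obtain ⟨α, hα⟩ := he (F, ⟨(a, b), hab⟩, 0)
    have hy := (v α).2.2.1
    have hne' := hne α
    simp only [hα] at hy hne'
    rw [← hr] at hy
    obtain ⟨⟨_, _, ⟨β, rfl⟩, rfl⟩, hx⟩ := hy
    rw [← hF] at hx
    exact hne' β hx

theorem exists_scale (R : ℕ) (hR : R ≠ 0) (p ε : ℝ) (hp0 : 0 ≤ p) (hp : p ≤ 1 / 2) (hε : 0 < ε) :
    ∃ k : ℕ, p ≤ (1 / 2) ^ (k + 1) ∧ ((1 / 2 : ℝ) ^ (k + 1)) ^ R ≤ 2 ^ R * p ^ R + ε := by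
  rcases hp0.eq_or_lt with rfl | hpos
  · obtain ⟨k, hk⟩ := exists_pow_lt_of_lt_one hε (show (1 / 2 : ℝ) < 1 by norm_num)
    refine ⟨k, by positivity, ?_⟩
    rw [zero_pow hR, mul_zero, zero_add, ← pow_mul]
    refine le_trans (pow_le_pow_of_le_one (by norm_num) (by norm_num) ?_) hk.le
    have : 1 ≤ R := Nat.one_le_iff_ne_zero.2 hR
    nlinarith
  · obtain ⟨n, hn1, hn2⟩ := exists_nat_pow_near_of_lt_one hpos (by linarith)
      (show (0 : ℝ) < 1 / 2 by norm_num) (by norm_num)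
    rcases n with _ | k
    · norm_num at hn1; linarith
    · refine ⟨k, hn2, ?_⟩
      rw [← mul_pow]
      have : ((1 / 2 : ℝ) ^ (k + 1)) ^ R ≤ (2 * p) ^ R := by
        apply pow_le_pow_left₀ (by positivity)
        rw [pow_succ] at hn1
        linarith
      linarith

/-- The block space. -/
abbrev Blk (R : ℕ) : Type := ∀ k : ℕ, (Fin (2 ^ ((k + 1) * R)) → ℕ)

noncomputable def blkIdx (R : ℕ) : (Σ k : ℕ, Fin (2 ^ ((k + 1) * R))) → ℕ := Encodable.encode

noncomputable def theta (R : ℕ) (x : ℕ → ℕ) : Blk R := fun k j => x (blkIdx R ⟨k, j⟩)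

theorem continuous_theta (R : ℕ) : Continuous (theta R) := by
  unfold theta
  fun_prop

theorem dim_theta (R : ℕ) (hR : R ≠ 0) (X : Set (ℕ → ℕ))
    (hX : ∀ g : ℕ → ℕ, ∃ x ∈ X, ∀ n, x n ≠ g n) :
    letI : MetricSpace (Blk R) := PiNat.metricSpace
    (R : ENNReal) ≤ dimH (theta R '' X) := by
  letI : MetricSpace (Blk R) := PiNat.metricSpace
  change (R : ENNReal) ≤ dimH (theta R '' X)
  letI : MeasurableSpace (Blk R) := borel _
  haveI : BorelSpace (Blk R) := ⟨rfl⟩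
  have key : MeasureTheory.Measure.hausdorffMeasure ((R : NNReal) : ℝ) (theta R '' X) ≠ 0 := by
    intro h0
    rw [MeasureTheory.Measure.hausdorffMeasure_apply] at h0
    have h1 := (ENNReal.iSup_eq_zero.1 (ENNReal.iSup_eq_zero.1 h0 (1 / 2))) (by norm_num)
    have h2 : (⨅ (t : ℕ → Set (Blk R)) (_ : theta R '' X ⊆ ⋃ n, t n)
        (_ : ∀ n, Metric.ediam (t n) ≤ 1 / 2),
          ∑' n, ⨆ _ : (t n).Nonempty, Metric.ediam (t n) ^ ((R : NNReal) : ℝ)) <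
          ENNReal.ofReal ((1 / 2) ^ (R + 1)) := by
      rw [h1]; simp
    simp only [iInf_lt_iff] at h2
    obtain ⟨t, ht, htd, hts⟩ := h2
    have hfin : ∀ i, Metric.ediam (t i) ≠ ⊤ := fun i =>
      ((htd i).trans_lt (by norm_num)).ne
    let p : ℕ → ℝ := fun i => (Metric.ediam (t i)).toReal
    have hp0 : ∀ i, 0 ≤ p i := fun i => ENNReal.toReal_nonneg
    have hp : ∀ i, p i ≤ 1 / 2 := fun i => by
      have := ENNReal.toReal_mono (by norm_num) (htd i)
      simpa using this
    have hsum : ∀ s : Finset ℕ, ∑ i ∈ s, p i ^ R ≤ (1 / 2) ^ (R + 1) := by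
      intro s
      have h3 : ∑ i ∈ s, ENNReal.ofReal (p i ^ R) ≤ ENNReal.ofReal ((1 / 2) ^ (R + 1)) := by
        refine le_trans ?_ hts.le
        refine le_trans (Finset.sum_le_sum fun i _ => ?_) (ENNReal.sum_le_tsum s)
        rw [ENNReal.ofReal_pow (hp0 i), ENNReal.ofReal_toReal (hfin i)]
        rcases (t i).eq_empty_or_nonempty with he | hne
        · simp [he, hR]
        · rw [iSup_pos hne]
          simp
      rw [← ENNReal.ofReal_sum_of_nonneg (fun i _ => pow_nonneg (hp0 i) R)] at h3
      exact (ENNReal.ofReal_le_ofReal_iff (by positivity)).1 h3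
    have hsc := fun i => exists_scale R hR (p i) ((1 / 2) ^ i / 8) (hp0 i) (hp i) (by positivity)
    choose k hk1 hk2 using hsc
    have hcard : ∀ (s : Finset ℕ) (c : ℕ), (∀ i ∈ s, k i = c) → s.card < 2 ^ ((c + 1) * R) := by
      intro s c hs
      have h4 : ∑ i ∈ s, ((1 / 2 : ℝ) ^ (c + 1)) ^ R ≤
          ∑ i ∈ s, (2 ^ R * p i ^ R + (1 / 2) ^ i / 8) :=
        Finset.sum_le_sum fun i hi => by have := hk2 i; rwa [hs i hi] at this
      rw [Finset.sum_add_distrib, ← Finset.mul_sum, ← Finset.sum_div, Finset.sum_const,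
        nsmul_eq_mul] at h4
      have h5 : ∑ i ∈ s, (1 / 2 : ℝ) ^ i ≤ 2 := by
        have h5' := summable_geometric_two.sum_le_tsum s (fun _ _ => by positivity)
        rwa [tsum_geometric_two] at h5'
      have h6 : (2 : ℝ) ^ R * ∑ i ∈ s, p i ^ R ≤ 1 / 2 := by
        refine (mul_le_mul_of_nonneg_left (hsum s) (by positivity)).trans ?_
        rw [pow_succ, ← mul_assoc, ← mul_pow]
        norm_num
      have h7 : (s.card : ℝ) * ((1 / 2) ^ (c + 1)) ^ R < 1 := by linarith
      rw [← pow_mul, one_div, inv_pow, ← div_eq_mul_inv, div_lt_one (by positivity)] at h7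
      exact_mod_cast h7
    classical
    let j : ∀ i, Fin (2 ^ ((k i + 1) * R)) := fun i =>
      ⟨((Finset.range i).filter (fun i' => k i' = k i)).card, hcard _ _ (by simp)⟩
    let N : ℕ → ℕ := fun i => blkIdx R ⟨k i, j i⟩
    have hlt : ∀ a b, a < b → N a ≠ N b := by
      intro a b hab h
      have h8 : (⟨k a, j a⟩ : Σ k : ℕ, Fin (2 ^ ((k + 1) * R))) = ⟨k b, j b⟩ :=
        Encodable.encode_injective h
      have h9 : k a = k b := congrArg Sigma.fst h8
      have h10 : ((j a : ℕ)) = (j b : ℕ) :=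
        congrArg (fun s : (Σ k : ℕ, Fin (2 ^ ((k + 1) * R))) => (s.2 : ℕ)) h8
      refine absurd h10 (ne_of_lt ?_)
      simp only [j]
      apply Finset.card_lt_card
      rw [Finset.ssubset_iff_of_subset]
      · refine ⟨a, by simp [hab, h9], by simp⟩
      · intro i hi
        simp only [Finset.mem_filter, Finset.mem_range] at hi ⊢
        exact ⟨by omega, by omega⟩
    have hN : Function.Injective N := by
      intro a b h
      rcases lt_trichotomy a b with hab | hab | hab
      · exact (hlt a b hab h).elim
      · exact hab
      · exact (hlt b a hab h.symm).elim
    have hpt : ∀ i, ∃ y : ℕ → ℕ, (∃ x ∈ X, theta R x ∈ t i) → theta R y ∈ t i := by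
      intro i
      by_cases h : ∃ x ∈ X, theta R x ∈ t i
      · obtain ⟨x, _, hx⟩ := h
        exact ⟨x, fun _ => hx⟩
      · exact ⟨0, fun h' => (h h').elim⟩
    choose y hy using hpt
    obtain ⟨x, hxX, hx⟩ := hX (Function.extend N (fun i => y i (N i)) 0)
    obtain ⟨i, hi⟩ := Set.mem_iUnion.1 (ht ⟨x, hxX, rfl⟩)
    have hyi := hy i ⟨x, hxX, hi⟩
    apply hx (N i)
    rw [hN.extend_apply]
    have hd : dist (theta R x) (theta R (y i)) ≤ (1 / 2) ^ (k i + 1) := by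
      refine le_trans ?_ (hk1 i)
      rw [dist_edist]
      exact ENNReal.toReal_mono (hfin i) (Metric.edist_le_ediam_of_mem hi hyi)
    have hc := PiNat.mem_cylinder_iff_dist_le.2 hd
    have := hc (k i) (Nat.lt_succ_self _)
    exact congrFun this (j i)
  have := le_dimH_of_hausdorffMeasure_ne_zero key
  simpa using this

end Aux


/-- For every real number `r` there exists a separable metric space `X` with
Hausdorff dimension at least `r` such that no uniformly continuous function `f : X → ℝ` has
image equal to a non-degenerate closed interval `[a,b]` (`a < b`). -/
theorem exists_separable_large_dimH_no_uniformlyContinuous_onto_interval (r : ℝ) :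
    ∃ (X : Type) (_ : MetricSpace X),
      TopologicalSpace.SeparableSpace X ∧
      ENNReal.ofReal r ≤ dimH (Set.univ : Set X) ∧
      ∀ f : X → ℝ, UniformContinuous f →
        ∀ a b : ℝ, a < b → Set.range f ≠ Set.Icc a b := by
  let : MetricSpace (Blk (⌈r⌉₊ + 1)) := PiNat.metricSpace
  obtain ⟨S, hS, hf⟩ := main_abs (E := Blk (⌈r⌉₊ + 1)) (theta _) (continuous_theta _) _
    (dim_theta (⌈r⌉₊ + 1) (Nat.succ_ne_zero _))
  refine ⟨S, inferInstance, inferInstance, ?_, hf⟩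
  have h1 : dimH (Set.univ : Set S) = dimH S := by
    rw [← (isometry_subtype_coe (s := S)).dimH_image, Set.image_univ, Subtype.range_coe]
  rw [h1]
  refine le_trans ?_ hS
  rw [← ENNReal.ofReal_natCast]
  apply ENNReal.ofReal_le_ofReal
  have := Nat.le_ceil r
  push_cast
  linarith
end

section
/- Assume that ℝ cannot be covered by fewer than continuum many meager sets (i.e., for every index set I of cardinality less than 𝔠 and every family (M_i)_{i∈I} of meager subsets of ℝ, the union ⋃_{i∈I} M_i is not all of ℝ). Then for every positive integer n there exists a set A ⊆ ℝ^n with Hausdorff dimension n such that for every function f : ℝ^n → ℝ that is uniformly continuous on A and every a < b, f(A) ≠ [a,b]. -/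
open scoped ENNReal
open Set MeasureTheory Topology

/-- The descending scheme of open sets coded by the binary digits of `r`. -/
noncomputable def scheme {X : Type*} (K : Set X) (B : ℕ → Set X) (r : ℝ) : ℕ → Set X
  | 0 => univ
  | k + 1 => by
      classical
      exact if Odd ⌊(2:ℝ) ^ (k + 1) * r⌋ ∧ (B k.unpair.1 ∩ K).Nonempty ∧
        B k.unpair.1 ⊆ scheme K B r k then B k.unpair.1 else scheme K B r k

lemma floor_two_pow {r s : ℝ} {k : ℕ}
    (h : ⌊(2:ℝ) ^ (k + 1) * r⌋ = ⌊(2:ℝ) ^ (k + 1) * s⌋) :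
    ⌊(2:ℝ) ^ k * r⌋ = ⌊(2:ℝ) ^ k * s⌋ := by
  have key : ∀ t : ℝ, ⌊(2:ℝ) ^ k * t⌋ = ⌊(2:ℝ) ^ (k + 1) * t⌋ / 2 := by
    intro t
    have h1 := Int.floor_le ((2:ℝ) ^ (k + 1) * t)
    have h2 := Int.lt_floor_add_one ((2:ℝ) ^ (k + 1) * t)
    set p := ⌊(2:ℝ) ^ (k + 1) * t⌋
    rw [pow_succ] at h1 h2
    rw [Int.floor_eq_iff]
    have h3 : 2 * (p / 2) ≤ p := by lia
    have h4 : p + 1 ≤ 2 * (p / 2) + 2 := by lia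
    have h3' : (2:ℝ) * ((p / 2 : ℤ) : ℝ) ≤ p := by exact_mod_cast h3
    have h4' : (p:ℝ) + 1 ≤ 2 * ((p / 2 : ℤ) : ℝ) + 2 := by exact_mod_cast h4
    constructor <;> linarith
  rw [key, key, h]

lemma scheme_congr {X : Type*} (K : Set X) (B : ℕ → Set X) {r s : ℝ} (k : ℕ)
    (h : ⌊(2:ℝ) ^ k * r⌋ = ⌊(2:ℝ) ^ k * s⌋) : scheme K B r k = scheme K B s k := by
  induction k with
  | zero => rfl
  | succ k ih =>
    have := ih (floor_two_pow h)
    classical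
    rw [scheme, scheme]
    split_ifs <;> simp_all

lemma scheme_anti {X : Type*} (K : Set X) (B : ℕ → Set X) (r : ℝ) (k : ℕ) :
    scheme K B r (k + 1) ⊆ scheme K B r k := by
  classical
  rw [scheme]
  split_ifs with h
  · exact h.2.2
  · exact subset_rfl

lemma scheme_nonempty {X : Type*} {K : Set X} (hK : K.Nonempty) (B : ℕ → Set X) (r : ℝ) (k : ℕ) :
    (scheme K B r k ∩ K).Nonempty := by
  classical
  induction k with
  | zero => simpa [scheme] using hK
  | succ k ih =>
    rw [scheme]
    split_ifs with h
    · exact h.2.1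
    · exact ih

lemma scheme_isOpen {X : Type*} [TopologicalSpace X] (K : Set X) {B : ℕ → Set X}
    (hB : ∀ m, IsOpen (B m)) (r : ℝ) (k : ℕ) :
    IsOpen (scheme K B r k) := by
  classical
  induction k with
  | zero => simp [scheme]
  | succ k ih =>
    rw [scheme]
    split_ifs with h
    · exact hB _
    · exact ih

lemma scheme_dense {X : Type*} {K : Set X} {B : ℕ → Set X} (P : Set X → Prop)
    (hP : ∀ r k, ∃ m, (B m ∩ K).Nonempty ∧ B m ⊆ scheme K B r k ∧ P (B m)) :
    Dense (interior {r | ∃ k, P (scheme K B r k)}) := by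
  rw [Metric.dense_iff]
  intro r ε hε
  obtain ⟨k, hk⟩ := exists_pow_lt_of_lt_one hε (show (1/2:ℝ) < 1 by norm_num)
  obtain ⟨m, hm1, hm2, hm3⟩ := hP r k
  set k' := Nat.pair m k with hk'
  have hkk : k ≤ k' := Nat.right_le_pair m k
  set p := ⌊(2:ℝ) ^ k * r⌋ with hp
  have p1 : (p:ℝ) ≤ 2 ^ k * r := Int.floor_le _
  have p2 : 2 ^ k * r < p + 1 := Int.lt_floor_add_one _
  have pk : (0:ℝ) < 2 ^ k := by positivity
  have main : ∀ t : ℝ, (p:ℝ) / 2 ^ k + (1/2) ^ (k' + 1) < t →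
      t < (p:ℝ) / 2 ^ k + (1/2) ^ (k' + 1) + (1/2) ^ (k' + 1) →
      (∀ j, k ≤ j → j ≤ k' → ⌊(2:ℝ) ^ j * t⌋ = p * 2 ^ (j - k)) ∧
        Odd ⌊(2:ℝ) ^ (k' + 1) * t⌋ := by
    intro t t1 t2
    constructor
    · intro j hj1 hj2
      obtain ⟨i, rfl⟩ := Nat.exists_eq_add_of_le hj1
      obtain ⟨l, hl⟩ := Nat.exists_eq_add_of_le hj2
      rw [Int.floor_eq_iff]
      have pl : (0:ℝ) < 2 ^ (k + i) := by positivity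
      have e0 : (2:ℝ) ^ (k + i) * ((p:ℝ) / 2 ^ k) = p * 2 ^ i := by
        rw [pow_add]; field_simp
      have e1 : (2:ℝ) ^ (k + i) * ((1/2) ^ (k' + 1) + (1/2) ^ (k' + 1)) = (1/2) ^ l := by
        have : (2:ℝ) ^ (k + i) * (1/2) ^ (k + i) = 1 := by rw [← mul_pow]; norm_num
        rw [hl]
        calc _ = ((2:ℝ) ^ (k + i) * (1/2) ^ (k + i)) * (1/2) ^ l := by ring
          _ = _ := by rw [this, one_mul]
      have e2 : ((1:ℝ)/2) ^ l ≤ 1 := pow_le_one₀ (by norm_num) (by norm_num)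
      have e3 : (0:ℝ) < (1/2) ^ (k' + 1) := by positivity
      push_cast
      rw [show k + i - k = i by lia]
      constructor
      · rw [← e0]; gcongr; linarith
      · have := mul_lt_mul_of_pos_left t2 pl
        rw [add_assoc, mul_add, e0, e1] at this
        linarith
    · have : ⌊(2:ℝ) ^ (k' + 1) * t⌋ = p * 2 ^ (k' + 1 - k) + 1 := by
        obtain ⟨l, hl⟩ := Nat.exists_eq_add_of_le hkk
        rw [Int.floor_eq_iff]
        have pl : (0:ℝ) < 2 ^ (k' + 1) := by positivity
        have e0 : (2:ℝ) ^ (k' + 1) * ((p:ℝ) / 2 ^ k) = p * 2 ^ (l + 1) := by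
          rw [hl, add_assoc, pow_add]; field_simp
        have e1 : (2:ℝ) ^ (k' + 1) * (1/2) ^ (k' + 1) = 1 := by rw [← mul_pow]; norm_num
        have a1 := mul_lt_mul_of_pos_left t1 pl
        have a2 := mul_lt_mul_of_pos_left t2 pl
        rw [mul_add, e0, e1] at a1
        rw [mul_add, mul_add, e0, e1] at a2
        push_cast
        rw [show k' + 1 - k = l + 1 by lia]
        constructor <;> linarith
      rw [this, show k' + 1 - k = (k' - k) + 1 by lia, pow_succ]
      exact ⟨p * 2 ^ (k' - k), by ring⟩
  have main2 : ∀ t : ℝ, (p:ℝ) / 2 ^ k + (1/2) ^ (k' + 1) < t →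
      t < (p:ℝ) / 2 ^ k + (1/2) ^ (k' + 1) + (1/2) ^ (k' + 1) →
      P (scheme K B t (k' + 1)) := by
    intro t t1 t2
    obtain ⟨q1, q2⟩ := main t t1 t2
    have h0 : scheme K B t k = scheme K B r k := by
      apply scheme_congr
      rw [q1 k le_rfl hkk]; simp [hp]
    have hun : k'.unpair.1 = m := by simp [hk']
    by_cases hex : scheme K B t k' = scheme K B r k ∨ B m ⊆ scheme K B t k'
    · have hsub : B m ⊆ scheme K B t k' := by
        rcases hex with h | h
        · rw [h]; exact hm2
        · exact h
      have : scheme K B t (k' + 1) = B m := by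
        classical
        rw [scheme, hun, if_pos ⟨q2, hm1, hsub⟩]
      rw [this]; exact hm3
    · exfalso
      apply hex
      left
      rw [← h0]
      have : ∀ i, k + i ≤ k' → scheme K B t (k + i) = scheme K B t k := by
        intro i
        induction i with
        | zero => intro _; rfl
        | succ i ih =>
          intro hi
          classical
          rw [← add_assoc, scheme, if_neg, ih (by lia)]
          rintro ⟨ho, -⟩
          rw [add_assoc, q1 (k + (i + 1)) (by lia) hi, show k + (i + 1) - k = i + 1 by lia, pow_succ] at ho
          rw [← Int.not_even_iff_odd] at ho
          exact ho ⟨p * 2 ^ i, by ring⟩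
      have := this (k' - k) (by lia)
      rwa [show k + (k' - k) = k' by lia] at this
  have e3 : (0:ℝ) < (1/2) ^ (k' + 1) := by positivity
  set c : ℝ := (p:ℝ) / 2 ^ k + (1/2) ^ (k' + 1) with hc
  set d : ℝ := (1/2) ^ (k' + 1) with hd
  refine ⟨c + d / 2, ?_, ?_⟩
  · have f1 : (p:ℝ) / 2 ^ k ≤ r := by rw [div_le_iff₀ pk]; linarith
    have f2 : r < (p:ℝ) / 2 ^ k + (1/2) ^ k := by
      rw [one_div, inv_pow, ← one_div, ← add_div, lt_div_iff₀ pk]; linarith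
    have f3 : d + d ≤ (1/2) ^ k := by
      have : d + d = (1/2:ℝ) ^ k' := by rw [hd]; ring
      rw [this]
      exact pow_le_pow_of_le_one (by norm_num) (by norm_num) hkk
    rw [Metric.mem_ball, Real.dist_eq, abs_lt]
    constructor <;> linarith
  · rw [mem_interior]
    refine ⟨Ioo c (c + d), ?_, isOpen_Ioo, ?_⟩
    · intro t ht
      exact ⟨k' + 1, main2 t ht.1 ht.2⟩
    · constructor <;> linarith

lemma exists_mem_compact_avoiding
    (hcov : ∀ (I : Type) (M : I → Set ℝ),
      Cardinal.mk I < Cardinal.continuum → (∀ i, IsMeagre (M i)) →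
      (⋃ i, M i) ≠ Set.univ)
    {X : Type*} [TopologicalSpace X] [SecondCountableTopology X] [T3Space X]
    {K : Set X} (hK : IsCompact K) (hKn : K.Nonempty)
    (I : Type) (hI : Cardinal.mk I < Cardinal.continuum) (F : I → Set X)
    (hFc : ∀ i, IsClosed (F i))
    (hF : ∀ i U, IsOpen U → (U ∩ K).Nonempty → ((U ∩ K) \ F i).Nonempty) :
    ∃ x ∈ K, ∀ i, x ∉ F i := by
  have hbas := TopologicalSpace.isBasis_countableBasis X
  have hne : (TopologicalSpace.countableBasis X).Nonempty := by
    obtain ⟨x, hx⟩ := hKn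
    obtain ⟨v, hv, -⟩ := hbas.exists_subset_of_mem_open (mem_univ x) isOpen_univ
    exact ⟨v, hv⟩
  obtain ⟨B, hB⟩ := (TopologicalSpace.countable_countableBasis X).exists_eq_range hne
  rw [hB] at hbas
  have hBo : ∀ m, IsOpen (B m) := fun m => hbas.isOpen (mem_range_self m)
  let P : I → Set X → Prop := fun i U => closure U ∩ F i = ∅
  have hmea : ∀ i, IsMeagre {r | ∃ k, P i (scheme K B r k)}ᶜ := by
    intro i
    have hd : Dense (interior {r | ∃ k, P i (scheme K B r k)}) := by
      apply scheme_dense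
      intro r k
      obtain ⟨x, ⟨hx1, hx2⟩, hx3⟩ := hF i _ (scheme_isOpen K hBo r k) (scheme_nonempty hKn B r k)
      have hnh : scheme K B r k \ F i ∈ 𝓝 x :=
        ((scheme_isOpen K hBo r k).sdiff (hFc i)).mem_nhds ⟨hx1, hx3⟩
      obtain ⟨t, ⟨m, rfl⟩, hxm, hm⟩ := hbas.exists_closure_subset hnh
      refine ⟨m, ⟨x, hxm, hx2⟩, fun y hy => (hm (subset_closure hy)).1, ?_⟩
      ext y
      simp only [mem_inter_iff, mem_empty_iff_false, iff_false, not_and]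
      exact fun hy => (hm hy).2
    rw [IsMeagre, compl_compl]
    exact Filter.mem_of_superset (residual_of_dense_open isOpen_interior hd) interior_subset
  have := hcov I _ hI hmea
  obtain ⟨r, hr⟩ := (ne_univ_iff_exists_notMem _).1 this
  simp only [mem_iUnion, not_exists, mem_compl_iff, not_not] at hr
  have hne : (⋂ k, (closure (scheme K B r k) ∩ K)).Nonempty := by
    apply IsCompact.nonempty_iInter_of_sequence_nonempty_isCompact_isClosed
    · intro k
      exact inter_subset_inter_left _ (closure_mono (scheme_anti K B r k))
    · intro k
      exact (scheme_nonempty hKn B r k).mono (inter_subset_inter_left _ subset_closure)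
    · exact hK.inter_left isClosed_closure
    · intro k
      exact isClosed_closure.inter hK.isClosed
  obtain ⟨x, hx⟩ := hne
  rw [mem_iInter] at hx
  refine ⟨x, (hx 0).2, fun i hi => ?_⟩
  obtain ⟨k, hk⟩ := hr i
  have : x ∈ closure (scheme K B r k) ∩ F i := ⟨(hx k).1, hi⟩
  rw [hk] at this
  exact this

lemma exists_good_compact {X : Type*} [MetricSpace X] [SecondCountableTopology X]
    [MeasurableSpace X] [BorelSpace X] (μ : Measure X) [μ.InnerRegular]
    {S : Set X} (hS : MeasurableSet S) (h : μ S ≠ 0) :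
    ∃ K ⊆ S, IsCompact K ∧ K.Nonempty ∧ ∀ U, IsOpen U → (U ∩ K).Nonempty → μ (U ∩ K) ≠ 0 := by
  obtain ⟨C, hCS, hC, hpos⟩ := hS.exists_lt_isCompact (μ := μ) (pos_iff_ne_zero.2 h)
  have hCm := hC.measurableSet
  have hsupp : ∀ U, IsOpen U → (μ.restrict C) (U ∩ (μ.restrict C).support) = μ.restrict C U := by
    intro U _
    apply measure_inter_conull
    exact Measure.measure_compl_support
  have hin : ∀ U, IsOpen U → μ (U ∩ (C ∩ (μ.restrict C).support)) = μ.restrict C U := by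
    intro U hU
    rw [← hsupp U hU, Measure.restrict_apply'  hCm]
    congr 1
    ext x; simp only [mem_inter_iff]; tauto
  refine ⟨C ∩ (μ.restrict C).support, fun x hx => hCS hx.1,
    hC.inter_right Measure.isClosed_support, ?_, ?_⟩
  · rw [nonempty_iff_ne_empty]
    intro he
    have := hin univ isOpen_univ
    rw [he] at this
    simp at this
    simp [← this] at hpos
  · rintro U hU ⟨x, hxU, hxC, hxs⟩
    rw [hin U hU]
    exact ((Measure.mem_support_iff_forall x).1 hxs U (hU.mem_nhds hxU)).ne'

lemma card_measurable_le (X : Type) [MeasurableSpace X] [MeasurableSpace.CountablyGenerated X] :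
    Cardinal.mk {s : Set X // MeasurableSet s} ≤ Cardinal.continuum := by
  obtain ⟨b, hb, he⟩ := MeasurableSpace.CountablyGenerated.isCountablyGenerated (α := X)
  have := MeasurableSpace.cardinal_measurableSet_le_continuum (s := b)
    (hb.le_aleph0.trans Cardinal.aleph0_le_continuum)
  rw [← he] at this
  exact this

lemma card_continuousMap_le (X : Type) [TopologicalSpace X] [TopologicalSpace.SeparableSpace X] :
    Cardinal.mk C(X, ℝ) ≤ Cardinal.continuum := by
  obtain ⟨D, hD, hDd⟩ := TopologicalSpace.exists_countable_dense X
  have : Function.Injective (fun (f : C(X, ℝ)) (d : D) => f d) := by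
    intro f g h
    ext x
    have : (f : X → ℝ) = g := by
      apply Continuous.ext_on hDd f.continuous g.continuous
      intro d hd
      exact congrFun h ⟨d, hd⟩
    rw [this]
  refine (Cardinal.mk_le_of_injective this).trans ?_
  rw [← Cardinal.power_def, Cardinal.mk_real]
  calc _ ≤ Cardinal.continuum ^ Cardinal.aleph0 :=
        Cardinal.power_le_power_left (Cardinal.continuum_ne_zero) hD.le_aleph0
    _ = _ := Cardinal.continuum_power_aleph0

lemma exists_good_set
    (hcov : ∀ (I : Type) (M : I → Set ℝ),
      Cardinal.mk I < Cardinal.continuum → (∀ i, IsMeagre (M i)) →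
      (⋃ i, M i) ≠ Set.univ)
    {X : Type} [MetricSpace X] [SecondCountableTopology X]
    [MeasurableSpace X] [BorelSpace X] (μ : Measure X) [μ.InnerRegular] [SFinite μ]
    (hμ : μ ≠ 0) :
    ∃ A : Set X, (∀ S, MeasurableSet S → μ S ≠ 0 → (S ∩ A).Nonempty) ∧
      ∀ g : C(X, ℝ), ∀ a b : ℝ, a < b → ∃ y ∈ Icc a b, y ∉ g '' A := by
  classical
  let T : Type := {s : {s : Set X // MeasurableSet s} // μ s ≠ 0} × C(X, ℝ) ×
    {p : ℝ × ℝ // p.1 < p.2}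
  have hT : Cardinal.mk T ≤ Cardinal.continuum := by
    have h1 := (Cardinal.mk_subtype_le (fun s : {s : Set X // MeasurableSet s} => μ s ≠ 0)).trans
      (card_measurable_le X)
    have h2 := card_continuousMap_le X
    have h3 : Cardinal.mk {p : ℝ × ℝ // p.1 < p.2} ≤ Cardinal.continuum := by
      refine (Cardinal.mk_subtype_le _).trans ?_
      simp [Cardinal.mk_real]
    simp only [T, Cardinal.mk_prod, Cardinal.lift_id]
    calc _ ≤ Cardinal.continuum * (Cardinal.continuum * Cardinal.continuum) :=
          mul_le_mul' h1 (mul_le_mul' h2 h3)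
      _ = _ := by simp
  obtain ⟨ι, e, hι⟩ : ∃ (ι : Type) (_ : ι ≃ T), Cardinal.mk ι ≤ Cardinal.continuum :=
    ⟨T, Equiv.refl T, hT⟩
  obtain ⟨_, _, hord⟩ := Cardinal.exists_ord_eq_type_lt ι
  have hseg : ∀ i : ι, Cardinal.mk (Iio i) < Cardinal.continuum := fun i =>
    (Cardinal.mk_Iio_lt i hord).trans_le hι
  let V : ι → Type := fun i => X × {y : ℝ // y ∈ Icc (e i).2.2.1.1 (e i).2.2.1.2 ∧ μ {x | (e i).2.1 x = y} = 0}
  have step : ∀ (i : ι) (prev : ∀ j, j < i → V j), ∃ v : V i, v.1 ∈ (e i).1.1.1 ∧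
      (∀ j h, (e j).2.1 v.1 ≠ (prev j h).2.1) ∧ (∀ j h, (e i).2.1 (prev j h).1 ≠ v.2.1) ∧
      (e i).2.1 v.1 ≠ v.2.1 := by
    intro i prev
    obtain ⟨K, hKS, hK, hKn, hKp⟩ := exists_good_compact μ (e i).1.1.2 (e i).1.2
    obtain ⟨x, hxK, hx⟩ := exists_mem_compact_avoiding hcov hK hKn (Iio i) (hseg i)
      (fun j => {x | (e j.1).2.1 x = (prev j.1 j.2).2.1})
      (fun j => isClosed_eq (e j.1).2.1.continuous continuous_const) (by
        intro j U hU hUK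
        by_contra hcon
        rw [not_nonempty_iff_eq_empty, sdiff_eq_empty] at hcon
        exact hKp U hU hUK (measure_mono_null hcon (prev j.1 j.2).2.2.2))
    let bad : Set ℝ := (range (fun j : Iio i => (e i).2.1 (prev j.1 j.2).1) ∪ {(e i).2.1 x}) ∪
      {t : ℝ | 0 < μ {a : X | (e i).2.1 a = t}}
    have hbad : Cardinal.mk bad < Cardinal.continuum := by
      have hc := Cardinal.aleph0_le_continuum
      refine (Cardinal.mk_union_le _ _).trans_lt (Cardinal.add_lt_of_lt hc
        ((Cardinal.mk_union_le _ _).trans_lt (Cardinal.add_lt_of_lt hc ?_ ?_)) ?_)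
      · exact Cardinal.mk_range_le.trans_lt (hseg i)
      · simpa using Cardinal.one_lt_aleph0.trans_le hc
      · exact (Measure.countable_meas_level_set_pos
          (e i).2.1.continuous.measurable).le_aleph0.trans_lt Cardinal.aleph0_lt_continuum
    have hy : ∃ y ∈ Icc (e i).2.2.1.1 (e i).2.2.1.2, y ∉ bad := by
      by_contra! hcon
      have := Cardinal.mk_le_mk_of_subset (show Icc (e i).2.2.1.1 (e i).2.2.1.2 ⊆ bad from hcon)
      rw [Cardinal.mk_Icc_real (e i).2.2.2] at this
      exact absurd hbad (not_lt.2 this)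
    obtain ⟨y, hyI, hyb⟩ := hy
    simp only [bad, mem_union, mem_range, mem_singleton_iff, mem_ofPred_eq, not_or, not_exists,
      not_lt, nonpos_iff_eq_zero] at hyb
    refine ⟨⟨x, ⟨y, hyI, hyb.2⟩⟩, hKS hxK, fun j h => hx ⟨j, h⟩,
      fun j h => hyb.1.1 ⟨j, h⟩, fun h => hyb.1.2 h.symm⟩
  choose st hst using step
  let w : ∀ i, V i := (wellFounded_lt (α := ι)).fix st
  have hw : ∀ i, w i = st i (fun j _ => w j) := fun i => WellFounded.fix_eq _ _ _
  have key : ∀ i, (w i).1 ∈ (e i).1.1.1 ∧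
      (∀ j, j < i → (e j).2.1 (w i).1 ≠ (w j).2.1) ∧ (∀ j, j < i → (e i).2.1 (w j).1 ≠ (w i).2.1) ∧
      (e i).2.1 (w i).1 ≠ (w i).2.1 := by
    intro i
    have := hst i (fun j _ => w j)
    rw [← hw i] at this
    exact this
  refine ⟨range (fun i => (w i).1), ?_, ?_⟩
  · intro S hS hS0
    let i0 : T := ⟨⟨⟨S, hS⟩, hS0⟩, 0, ⟨(0, 1), by simp⟩⟩
    have := (key (e.symm i0)).1
    have hs : (e (e.symm i0)).1.1.1 = S := by rw [e.apply_symm_apply]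
    exact ⟨_, hs.subset this, mem_range_self _⟩
  · intro g a b hab
    let i0 : T := ⟨⟨⟨univ, MeasurableSet.univ⟩, by simpa using hμ⟩, g, ⟨(a, b), hab⟩⟩
    obtain ⟨i, hi⟩ := e.surjective i0
    have hg : (e i).2.1 = g := by rw [hi]
    have hI := (w i).2.2.1
    have hs : Icc (e i).2.2.1.1 (e i).2.2.1.2 = Icc a b := by rw [hi]
    refine ⟨(w i).2.1, hs.subset hI, ?_⟩
    rw [← hg]
    rintro ⟨_, ⟨j, rfl⟩, hj⟩
    rcases lt_trichotomy i j with h | h | h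
    · exact (key j).2.1 i h hj
    · subst h
      exact (key i).2.2.2 hj
    · exact (key i).2.2.1 j h hj

/-- Assume that `ℝ` cannot be covered by fewer than continuum many meager sets
(`cov(M) = 𝔠`). Then for every positive integer `n` there exists a set `A ⊆ ℝ^n` with Hausdorff
dimension `n` such that for every function `f : ℝ^n → ℝ` that is uniformly continuous on `A`
and every `a < b`, `f(A) ≠ [a,b]`. -/
theorem covMeager_eq_continuum_imp_exists_set_no_uniformlyContinuousOn_onto_interval
    (hcov : ∀ (I : Type) (M : I → Set ℝ),
      Cardinal.mk I < Cardinal.continuum → (∀ i, IsMeagre (M i)) →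
      (⋃ i, M i) ≠ Set.univ)
    (n : ℕ) (hn : 0 < n) :
    ∃ A : Set (EuclideanSpace ℝ (Fin n)),
      dimH A = n ∧
      ∀ f : EuclideanSpace ℝ (Fin n) → ℝ, UniformContinuousOn f A →
        ∀ a b : ℝ, a < b → f '' A ≠ Set.Icc a b := by
  have hnt : Nonempty (Fin n) := ⟨⟨0, hn⟩⟩
  obtain ⟨A, hA1, hA2⟩ := exists_good_set hcov (volume : Measure (EuclideanSpace ℝ (Fin n)))
    (NeZero.ne _)
  refine ⟨A, le_antisymm ?_ ?_, ?_⟩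
  · refine (dimH_mono (subset_univ A)).trans ?_
    rw [Real.dimH_univ_eq_finrank]
    simp
  · have hvol : volume A ≠ 0 := by
      intro h0
      have h1 : volume (toMeasurable volume A)ᶜ ≠ 0 := by
        intro h2
        have h3 := measure_union_null ((measure_toMeasurable A).trans h0) h2
        rw [union_compl_self] at h3
        exact isOpen_univ.measure_ne_zero volume univ_nonempty h3
      obtain ⟨x, hx1, hx2⟩ := hA1 _ (measurableSet_toMeasurable _ _).compl h1
      exact hx1 (subset_toMeasurable _ _ hx2)
    have he := (EuclideanSpace.equiv (Fin n) ℝ).dimH_image A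
    rw [← he]
    have hv : (volume : Measure (Fin n → ℝ)) (EuclideanSpace.equiv (Fin n) ℝ '' A) ≠ 0 := by
      intro h0
      have := (PiLp.volume_preserving_ofLp (Fin n)).quasiMeasurePreserving.preimage_null h0
      refine hvol (measure_mono_null ?_ this)
      intro x hx
      exact ⟨x, hx, rfl⟩
    rw [← hausdorffMeasure_pi_real] at hv
    have := le_dimH_of_hausdorffMeasure_ne_zero (d := (n : NNReal)) (by simpa using hv)
    simpa using this
  · intro f hf a b hab hfA
    have hd : Dense A := by
      rw [dense_iff_inter_open]
      intro U hU hUn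
      exact hA1 U hU.measurableSet (hU.measure_ne_zero volume hUn)
    have hf' : UniformContinuous (A.domRestrict f) := uniformContinuousOn_iff_restrict.1 hf
    let g : C(EuclideanSpace ℝ (Fin n), ℝ) :=
      ⟨hd.extend (A.domRestrict f), (hd.uniformContinuous_extend hf').continuous⟩
    have hg : ∀ x ∈ A, g x = f x := fun x hx => hd.extend_of_ind hf' ⟨x, hx⟩
    obtain ⟨y, hy, hyA⟩ := hA2 g a b hab
    rw [← hfA] at hy
    obtain ⟨x, hx, rfl⟩ := hy
    exact hyA ⟨x, hx, hg x hx⟩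
end

section
/- Assume that ℝ can be covered by fewer than continuum many meager sets (i.e., there is an index set I of cardinality less than 𝔠 and a family (M_i)_{i∈I} of meager subsets of ℝ with ⋃_{i∈I} M_i = ℝ). Then for every real number r there exists a separable metric space X of cardinality strictly less than 𝔠 whose Hausdorff dimension is at least r; consequently no function from X onto a non-degenerate segment exists. -/
open scoped ENNReal

namespace CovM

/-- Every family of functions indexed by `J` is met by a single function. -/
def Guess (J : Type) : Prop :=
  ∀ f : J → ℕ → ℕ, ∃ g : ℕ → ℕ, ∀ j, ∃ n, f j n = g n

lemma Guess.enc {J β : Type} [Encodable β] [Inhabited β] (h : Guess J) (f : J → ℕ → β) :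
    ∃ g : ℕ → β, ∀ j, ∃ n, f j n = g n := by
  obtain ⟨g, hg⟩ := h (fun j n => Encodable.encode (f j n))
  refine ⟨fun n => (Encodable.decode (g n)).getD default, fun j => ?_⟩
  obtain ⟨n, hn⟩ := hg j
  refine ⟨n, ?_⟩
  simp [← hn]

lemma Guess.meets {J β : Type} [Encodable β] [Inhabited β] (h : Guess J)
    (X : J → Set ℕ) (hX : ∀ j, (X j).Infinite) (f : J → ℕ → β) :
    ∃ g : ℕ → β, ∀ j, ∃ x ∈ X j, f j x = g x := by
  classical
  choose D hD hDc using fun j n => (hX j).exists_subset_card_eq (n + 1)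
  obtain ⟨G, hG⟩ := h.enc (β := Finset ℕ × List β)
    (fun j n => (D j n, (List.range ((D j n).sup id + 1)).map (f j)))
  let t : ℕ → Finset ℕ := fun n => if (G n).1.card = n + 1 then (G n).1 else Finset.range (n + 1)
  have ht : ∀ n, (t n).card = n + 1 := by
    intro n
    by_cases hc : (G n).1.card = n + 1 <;> simp [t, hc]
  obtain ⟨x, hxi, hx⟩ := (Finset.all_card_le_biUnion_card_iff_exists_injective t).1 (by
    intro s
    rcases s.eq_empty_or_nonempty with rfl | hs
    · simp
    have h1 : s ⊆ Finset.range (s.max' hs + 1) := by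
      intro a ha
      have := s.le_max' a ha
      simp; omega
    calc s.card ≤ (Finset.range (s.max' hs + 1)).card := Finset.card_le_card h1
      _ = (t (s.max' hs)).card := by simp [ht]
      _ ≤ _ := Finset.card_le_card (Finset.subset_biUnion_of_mem t (s.max'_mem hs)))
  refine ⟨Function.extend x (fun n => (G n).2.getD (x n) default) default, fun j => ?_⟩
  obtain ⟨n, hn⟩ := hG j
  have h1 : (G n).1 = D j n := by rw [← hn]
  have h2 : (G n).2 = (List.range ((D j n).sup id + 1)).map (f j) := by rw [← hn]
  have hxn : x n ∈ D j n := by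
    have := hx n
    simpa [t, h1, hDc] using this
  refine ⟨x n, hD j n hxn, ?_⟩
  rw [hxi.extend_apply, h2]
  have : x n < (D j n).sup id + 1 := Nat.lt_succ_of_le (Finset.le_sup (f := id) hxn)
  simp [List.getD, this]

/-- monotone majorant -/
def maj (f : ℕ → ℕ) (n : ℕ) : ℕ := (Finset.range (n + 1)).sup f + n + 1

lemma le_maj (f : ℕ → ℕ) {s n : ℕ} (h : s ≤ n) : f s ≤ maj f n := by
  have : f s ≤ (Finset.range (n + 1)).sup f := Finset.le_sup (by simp; omega)
  unfold maj; omega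

lemma maj_mono (f : ℕ → ℕ) : Monotone (maj f) := by
  intro a b hab
  have : (Finset.range (a + 1)).sup f ≤ (Finset.range (b + 1)).sup f :=
    Finset.sup_mono (by simpa using hab)
  unfold maj; omega

lemma lt_maj (f : ℕ → ℕ) (n : ℕ) : n < maj f n := by unfold maj; omega

lemma exists_seq {J : Type} (h : Guess (J × ℕ)) (f : J → ℕ → ℕ) :
    ∃ a : ℕ → ℕ, StrictMono a ∧
      ∀ j, {k | ∀ s ≤ a k, f j s ≤ a (k + 1)}.Infinite := by
  obtain ⟨g, hg⟩ := h (fun p n => maj (f p.1) (maj (f p.1) (n + p.2)))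
  let φ := maj g
  let a : ℕ → ℕ := fun k => φ^[k] 0
  have ha : ∀ k, a (k + 1) = φ (a k) := fun k => Function.iterate_succ_apply' φ k 0
  have hmono : StrictMono a := strictMono_nat_of_lt_succ (fun k => by
    rw [ha]; exact lt_maj g _)
  refine ⟨a, hmono, fun j => ?_⟩
  rw [Set.infinite_iff_exists_gt]
  intro m
  obtain ⟨n, hn⟩ := hg (j, a (m + 1))
  simp only at hn
  set N := n + a (m + 1) with hN
  have hNφ : maj (f j) (maj (f j) N) ≤ φ N := hn ▸ le_maj g (by omega)
  obtain ⟨k, hk1, hk2⟩ : ∃ k, a k ≤ N ∧ N < a (k + 1) := by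
    have hex : ∃ k, N < a k := ⟨N + 1, lt_of_lt_of_le (Nat.lt_succ_self N) (hmono.le_apply)⟩
    have h0 : Nat.find hex ≠ 0 := by
      intro h0
      have := Nat.find_spec hex
      rw [h0] at this
      simp [a] at this
    obtain ⟨k, hk⟩ := Nat.exists_eq_succ_of_ne_zero h0
    refine ⟨k, ?_, ?_⟩
    · have := Nat.find_min hex (m := k) (by omega)
      omega
    · have := Nat.find_spec hex
      rwa [hk] at this
  have hmk : m < k := by
    have : a (m + 1) < a (k + 1) := by omega
    have := hmono.lt_iff_lt.1 this
    omega
  by_cases hc : maj (f j) (a k) ≤ a (k + 1)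
  · exact ⟨k, fun s hs => (le_maj (f j) hs).trans hc, hmk⟩
  · refine ⟨k + 1, fun s hs => (le_maj (f j) hs).trans ?_, by omega⟩
    have h1 : a (k + 1) ≤ maj (f j) N := (not_le.1 hc).le.trans (maj_mono _ hk1)
    calc _ ≤ _ := maj_mono (f j) h1
      _ ≤ _ := hNφ
      _ ≤ φ (a (k + 1)) := maj_mono g hk2.le
      _ = _ := (ha _).symm

lemma exists_basis : ∃ C : ℕ → Set ℝ, (∀ s, IsCompact (C s)) ∧ (∀ s, (C s).Nonempty) ∧
    ∀ U : Set ℝ, IsOpen U → Dense U → ∀ s, ∃ t, C t ⊆ C s ∧ C t ⊆ U := by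
  have : Nonempty {p : ℚ × ℚ // p.1 < p.2} := ⟨⟨(0, 1), by norm_num⟩⟩
  obtain ⟨e, he⟩ := exists_surjective_nat {p : ℚ × ℚ // p.1 < p.2}
  have hlt : ∀ s, ((e s).1.1 : ℝ) < (e s).1.2 := fun s => by exact_mod_cast (e s).2
  refine ⟨fun s => Set.Icc ((e s).1.1 : ℝ) (e s).1.2, fun s => isCompact_Icc,
    fun s => Set.nonempty_Icc.2 (hlt s).le, fun U hU hd s => ?_⟩
  obtain ⟨x, hx, hxU⟩ := hd.inter_open_nonempty _ (isOpen_Ioo (a := ((e s).1.1 : ℝ))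
    (b := (e s).1.2)) (Set.nonempty_Ioo.2 (hlt s))
  obtain ⟨l, u, ⟨h1, h2⟩, h3⟩ := (mem_nhds_iff_exists_Ioo_subset).1
    ((isOpen_Ioo.inter hU).mem_nhds ⟨hx, hxU⟩)
  obtain ⟨p, hp1, hp2⟩ := exists_rat_btwn h1
  obtain ⟨q, hq1, hq2⟩ := exists_rat_btwn h2
  obtain ⟨t, ht⟩ := he ⟨(p, q), by exact_mod_cast hp2.trans hq1⟩
  have hsub : Set.Icc (p : ℝ) q ⊆ _ := (Set.Icc_subset_Ioo hp1 hq2).trans h3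
  refine ⟨t, ?_, ?_⟩ <;> beta_reduce <;> rw [ht]
  · exact (hsub.trans Set.inter_subset_left).trans Set.Ioo_subset_Icc_self
  · exact hsub.trans Set.inter_subset_right

lemma Guess.inter {J : Type} (h : Guess J) (h' : Guess (J × ℕ)) (U : J → Set ℝ)
    (hU : ∀ j, IsOpen (U j)) (hd : ∀ j, Dense (U j)) : (⋂ j, U j).Nonempty := by
  classical
  obtain ⟨C, hC, hne, hb⟩ := exists_basis
  choose f hf1 hf2 using fun j => hb (U j) (hU j) (hd j)
  obtain ⟨a, ha, hX⟩ := exists_seq h' f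
  obtain ⟨g, hg⟩ := h.meets _ hX (fun j k => (List.range (a k + 1)).map (f j))
  let step : ℕ → ℕ → ℕ := fun k s =>
    if (g k).getD s 0 ≤ a (k + 1) ∧ C ((g k).getD s 0) ⊆ C s then (g k).getD s 0 else s
  let S : ℕ → ℕ := fun k => Nat.rec 0 step k
  have hS : ∀ k, S (k + 1) = step k (S k) := fun k => rfl
  have hSa : ∀ k, S k ≤ a k := by
    intro k
    induction k with
    | zero => exact Nat.zero_le _
    | succ k ih =>
      rw [hS]
      simp only [step]
      split_ifs with hc
      · exact hc.1
      · exact ih.trans (ha (Nat.lt_succ_self k)).le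
  have hnest : ∀ k, C (S (k + 1)) ⊆ C (S k) := by
    intro k
    rw [hS]
    simp only [step]
    split_ifs with hc
    · exact hc.2
    · exact subset_rfl
  obtain ⟨y, hy⟩ := IsCompact.nonempty_iInter_of_sequence_nonempty_isCompact_isClosed
    (fun k => C (S k)) hnest (fun k => hne _) (hC _) (fun k => (hC _).isClosed)
  rw [Set.mem_iInter] at hy
  refine ⟨y, Set.mem_iInter.2 fun j => ?_⟩
  obtain ⟨k, hk, hgk⟩ := hg j
  have h1 : (g k).getD (S k) 0 = f j (S k) := by
    rw [← hgk]
    have : S k < a k + 1 := Nat.lt_succ_of_le (hSa k)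
    simp [List.getD, this]
  have h2 : S (k + 1) = f j (S k) := by
    rw [hS]
    simp only [step, h1]
    rw [if_pos ⟨hk _ (hSa k), hf1 j _⟩]
  exact hf2 j (S k) (h2 ▸ hy (k + 1))

lemma exists_not_guess (hcov : ∃ (I : Type) (M : I → Set ℝ),
      Cardinal.mk I < Cardinal.continuum ∧ (∀ i, IsMeagre (M i)) ∧ (⋃ i, M i) = Set.univ) :
    ∃ K : Type, Cardinal.mk K < Cardinal.continuum ∧ ¬ Guess K := by
  by_contra! hcon
  obtain ⟨I, M, hI, hM, hU⟩ := hcov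
  have hprod : ∀ A : Type, Cardinal.mk A < Cardinal.continuum →
      Cardinal.mk (A × ℕ) < Cardinal.continuum := by
    intro A hA
    rw [Cardinal.mk_prod]
    simpa using Cardinal.mul_lt_of_lt Cardinal.aleph0_le_continuum hA
      Cardinal.aleph0_lt_continuum
  have : ∀ i, ∃ V : ℕ → Set ℝ, (∀ n, IsOpen (V n)) ∧ (∀ n, Dense (V n)) ∧
      ⋂ n, V n ⊆ (M i)ᶜ := by
    intro i
    obtain ⟨S, h1, h2, h3, h4⟩ := mem_residual_iff.1 (hM i)
    obtain ⟨V, hV⟩ := (h3.insert Set.univ).exists_eq_range (Set.insert_nonempty _ _)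
    have hVm : ∀ n, V n = Set.univ ∨ V n ∈ S := fun n => by
      have : V n ∈ insert Set.univ S := hV ▸ Set.mem_range_self n
      exact this
    refine ⟨V, fun n => ?_, fun n => ?_, fun x hx => h4 ?_⟩
    · rcases hVm n with h | h
      · rw [h]; exact isOpen_univ
      · exact h1 _ h
    · rcases hVm n with h | h
      · rw [h]; exact dense_univ
      · exact h2 _ h
    · intro s hs
      have : s ∈ Set.range V := hV ▸ Set.mem_insert_of_mem _ hs
      obtain ⟨n, rfl⟩ := this
      exact Set.mem_iInter.1 hx n
  choose V hVo hVd hVM using this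
  obtain ⟨y, hy⟩ := Guess.inter (hcon _ (hprod I hI)) (hcon _ (hprod _ (hprod I hI)))
    (fun p => V p.1 p.2) (fun p => hVo _ _) (fun p => hVd _ _)
  have : y ∈ ⋃ i, M i := hU ▸ Set.mem_univ y
  obtain ⟨i, hi⟩ := Set.mem_iUnion.1 this
  exact hVM i (Set.mem_iInter.2 fun n => Set.mem_iInter.1 hy (i, n)) hi

lemma exists_rank (D : ℕ) (hD : D ≠ 0) (w : ℕ → ℝ) (hw : ∀ m, 0 < w m)
    (hs : ∀ s : Finset ℕ, ∑ m ∈ s, w m ≤ 1) :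
    ∃ N R : ℕ → ℕ, (∀ m, w m ≤ ((1 / 2 : ℝ) ^ N m) ^ D) ∧
      (∀ m, R m < 2 ^ ((N m + 1) * D)) ∧ ∀ m m', N m = N m' → R m = R m' → m = m' := by
  classical
  have hy0 : (0 : ℝ) < (1 / 2) ^ D := by positivity
  have hy1 : (1 / 2 : ℝ) ^ D < 1 := pow_lt_one₀ (by norm_num) (by norm_num) hD
  choose N hN1 hN2 using fun m => exists_nat_pow_near_of_lt_one (hw m)
    (by simpa using hs {m}) hy0 hy1
  refine ⟨N, fun m => ((Finset.range m).filter (fun k => N k = N m)).card, fun m => ?_,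
    fun m => ?_, ?_⟩
  · rw [← pow_mul, mul_comm, pow_mul]; exact hN2 m
  · have hlt : ((Finset.range m).filter (fun k => N k = N m)).card <
        ((Finset.range (m + 1)).filter (fun k => N k = N m)).card := by
      rw [Finset.range_add_one, Finset.filter_insert, if_pos rfl, Finset.card_insert_of_notMem]
      · omega
      · simp
    refine lt_of_lt_of_le hlt ?_
    set s := (Finset.range (m + 1)).filter (fun k => N k = N m)
    have h1 : (s.card : ℝ) * ((1 / 2 : ℝ) ^ D) ^ (N m + 1) ≤ 1 := by
      refine le_trans ?_ (hs s)
      rw [← nsmul_eq_mul]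
      refine Finset.card_nsmul_le_sum _ _ _ fun k hk => ?_
      have : N k = N m := (Finset.mem_filter.1 hk).2
      rw [← this]
      exact (hN1 k).le
    have h2 : ((1 / 2 : ℝ) ^ D) ^ (N m + 1) = ((2 : ℝ) ^ ((N m + 1) * D))⁻¹ := by
      rw [← pow_mul, mul_comm, one_div, inv_pow]
    rw [h2, ← div_eq_mul_inv, div_le_one (by positivity)] at h1
    exact_mod_cast h1
  · have key : ∀ m m', m < m' → N m = N m' →
        ((Finset.range m).filter (fun k => N k = N m)).card <
        ((Finset.range m').filter (fun k => N k = N m')).card := by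
      intro m m' hlt hNN
      refine Finset.card_lt_card ((Finset.ssubset_iff_of_subset ?_).2 ⟨m, ?_, ?_⟩)
      · intro k hk
        simp only [Finset.mem_filter, Finset.mem_range] at hk ⊢
        omega
      · simp [hlt, hNN]
      · simp
    intro m m' hNN hR
    rcases lt_trichotomy m m' with h | h | h
    · exact absurd hR (key m m' h hNN).ne
    · exact h
    · exact absurd hR (key m' m h hNN.symm).ne'

open MeasureTheory Measure in
lemma exists_space {K : Type} (hK : ¬ Guess K) (hc : Cardinal.mk K < Cardinal.continuum)
    (D : ℕ) (hD : D ≠ 0) :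
    ∃ (X : Type) (_ : MetricSpace X), TopologicalSpace.SeparableSpace X ∧
      Cardinal.mk X < Cardinal.continuum ∧ (D : ℝ≥0∞) ≤ dimH (Set.univ : Set X) := by
  classical
  unfold Guess at hK
  push Not at hK
  obtain ⟨f, hf⟩ := hK
  let F : K → ℕ → ℕ := fun k n => Encodable.encode
    ((List.range (2 ^ ((n + 1) * D))).map (fun i => f k (Nat.pair n i)))
  let dec : ℕ → ℕ → ℕ := fun c i => ((Encodable.decode (α := List ℕ) c).getD []).getD i 0
  have hdec : ∀ k n i, i < 2 ^ ((n + 1) * D) → dec (F k n) i = f k (Nat.pair n i) := by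
    intro k n i hi
    simp [dec, F, List.getD, hi]
  let : MetricSpace (ℕ → ℕ) := PiNat.metricSpaceNatNat
  refine ⟨Set.range F, inferInstance, inferInstance, Cardinal.mk_range_le.trans_lt hc, ?_⟩
  borelize ↥(Set.range F)
  have := @le_dimH_of_hausdorffMeasure_ne_zero (Set.range F) _ _ _ Set.univ (D : NNReal)
  refine (by simpa using this : _ → _) ?_
  intro h0
  have h0 : μH[(D : ℝ)] (Set.univ : Set (Set.range F)) = 0 := by simpa using h0
  rw [hausdorffMeasure_apply] at h0
  simp only [ENNReal.iSup_eq_zero] at h0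
  have h1 := h0 1 one_pos
  have h2 := h1.trans_lt (by norm_num : (0 : ℝ≥0∞) < 2⁻¹)
  simp only [iInf_lt_iff] at h2
  obtain ⟨t, ht, -, hsum⟩ := h2
  set T : ℕ → ℝ≥0∞ := fun m => ⨆ _ : (t m).Nonempty, Metric.ediam (t m) ^ (D : ℝ) with hT
  have hTtop : ∀ m, T m ≠ ⊤ := ENNReal.ne_top_of_tsum_ne_top (ne_top_of_lt hsum)
  obtain ⟨N, R, hN, hR, hinj⟩ := exists_rank D hD
    (fun m => (T m).toReal + (1 / 2 : ℝ) ^ (m + 2)) (fun m => by positivity) (by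
      intro s
      rw [Finset.sum_add_distrib]
      have e1 : ∑ m ∈ s, (T m).toReal ≤ 2⁻¹ := by
        rw [← ENNReal.toReal_sum (fun m _ => hTtop m)]
        have := ENNReal.toReal_mono (by simp) ((ENNReal.sum_le_tsum s).trans hsum.le)
        rwa [ENNReal.toReal_inv, ENNReal.toReal_ofNat] at this
      have e2 : ∑ m ∈ s, (1 / 2 : ℝ) ^ (m + 2) ≤ 2⁻¹ := by
        have h3 : ∑ m ∈ s, (1 / 2 : ℝ) ^ m ≤ 2 := by
          exact (summable_geometric_two.sum_le_tsum s (fun _ _ => by positivity)).trans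
            tsum_geometric_two.le
        simp only [pow_add, ← Finset.sum_mul]
        linarith
      linarith)
  have hcommon : ∀ m, ∀ x ∈ t m, ∀ y ∈ t m, x.1 (N m) = y.1 (N m) := by
    intro m x hx y hy
    have hlt : (T m).toReal < ((1 / 2 : ℝ) ^ N m) ^ D := by
      have := hN m
      have h3 : (0 : ℝ) < (1 / 2 : ℝ) ^ (m + 2) := by positivity
      linarith
    have hed : edist x y ^ D ≤ T m := by
      rw [hT]
      have hne : (t m).Nonempty := ⟨x, hx⟩
      simp only [hne, iSup_pos, ENNReal.rpow_natCast]
      gcongr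
      exact Metric.edist_le_ediam_of_mem hx hy
    have hd : dist x y ^ D ≤ (T m).toReal := by
      have := ENNReal.toReal_mono (hTtop m) hed
      rwa [ENNReal.toReal_pow, edist_dist, ENNReal.toReal_ofReal dist_nonneg] at this
    have hd2 : dist x y < (1 / 2) ^ N m := lt_of_pow_lt_pow_left₀ D (by positivity)
      (hd.trans_lt hlt)
    exact PiNat.apply_eq_of_dist_lt (E := fun _ => ℕ) hd2 le_rfl
  let v : ℕ → ℕ := fun m => if h : (t m).Nonempty then h.some.1 (N m) else 0
  have hv : ∀ m, ∀ x ∈ t m, v m = x.1 (N m) := by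
    intro m x hx
    have hne : (t m).Nonempty := ⟨x, hx⟩
    simp only [v, dif_pos hne]
    exact hcommon m _ hne.some_mem _ hx
  let p : ℕ → ℕ := fun m => Nat.pair (N m) (R m)
  have hp : Function.Injective p := by
    intro m m' h
    obtain ⟨h3, h4⟩ := Nat.pair_eq_pair.1 h
    exact hinj m m' h3 h4
  obtain ⟨k, hk⟩ := hf (Function.extend p (fun m => dec (v m) (R m)) 0)
  obtain ⟨m, hm⟩ := Set.mem_iUnion.1 (ht (Set.mem_univ ⟨F k, k, rfl⟩))
  refine hk (p m) ?_
  rw [hp.extend_apply, hv m _ hm, hdec k _ _ (hR m)]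

end CovM

/-- Assume that `ℝ` can be covered by fewer than continuum many meager sets
(`cov(M) < 𝔠`). Then for every real number `r` there exists a separable metric space `X` of
cardinality strictly less than `𝔠` whose Hausdorff dimension is at least `r`; consequently no
function from `X` onto a non-degenerate segment exists. -/
theorem covMeager_lt_continuum_imp_exists_small_separable_large_dimH
    (hcov : ∃ (I : Type) (M : I → Set ℝ),
      Cardinal.mk I < Cardinal.continuum ∧ (∀ i, IsMeagre (M i)) ∧ (⋃ i, M i) = Set.univ)
    (r : ℝ) :
    ∃ (X : Type) (_ : MetricSpace X),
      TopologicalSpace.SeparableSpace X ∧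
      Cardinal.mk X < Cardinal.continuum ∧
      ENNReal.ofReal r ≤ dimH (Set.univ : Set X) ∧
      ∀ (f : X → ℝ) (a b : ℝ), a < b → Set.range f ≠ Set.Icc a b := by
  obtain ⟨K, hKc, hK⟩ := CovM.exists_not_guess hcov
  obtain ⟨n, hn⟩ := exists_nat_ge r
  obtain ⟨X, hX, h1, h2, h3⟩ := CovM.exists_space hK hKc (n + 1) (Nat.succ_ne_zero n)
  refine ⟨X, hX, h1, h2, le_trans ?_ h3, fun f a b hab heq => ?_⟩
  · rw [← ENNReal.ofReal_natCast]
    apply ENNReal.ofReal_le_ofReal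
    push_cast
    linarith
  · have h4 : Cardinal.mk (Set.range f) ≤ Cardinal.mk X := Cardinal.mk_range_le
    rw [heq, Cardinal.mk_Icc_real hab] at h4
    exact absurd h2 (not_lt.2 h4)
end

section
/- Fix a positive integer n and assume hypothesis (⋆): for every index set I of cardinality less than 𝔠, every family (F_i)_{i∈I} of closed Lebesgue-null subsets of ℝ^n, and every Lebesgue-null set N ⊆ ℝ^n, the union N ∪ ⋃_{i∈I} F_i is not all of ℝ^n. Then there exists a set A ⊆ ℝ^n such that A does not have Lebesgue outer measure zero, and for every continuous function f : ℝ^n → ℝ the image f(A) contains no non-degenerate interval (i.e., for all a < b, the open interval (a,b) is not contained in f(A)). -/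
open MeasureTheory
open scoped ENNReal

/-- Fix a positive integer `n` and assume hypothesis (⋆): fewer than continuum
many closed Lebesgue-null subsets of `ℝ^n` together with one Lebesgue-null set cannot cover
`ℝ^n`. Then there exists a set `A ⊆ ℝ^n` that does not have Lebesgue outer measure zero such
that for every continuous `f : ℝ^n → ℝ` the image `f(A)` contains no non-degenerate interval. -/
theorem star_imp_exists_nonNull_set_continuous_image_no_interval
    (n : ℕ) (hn : 0 < n)
    (hstar : ∀ (I : Type) (F : I → Set (EuclideanSpace ℝ (Fin n)))
        (N : Set (EuclideanSpace ℝ (Fin n))),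
      Cardinal.mk I < Cardinal.continuum →
      (∀ i, IsClosed (F i) ∧ volume (F i) = 0) →
      volume N = 0 →
      N ∪ ⋃ i, F i ≠ Set.univ) :
    ∃ A : Set (EuclideanSpace ℝ (Fin n)),
      volume A ≠ 0 ∧
      ∀ f : EuclideanSpace ℝ (Fin n) → ℝ, Continuous f →
        ∀ a b : ℝ, a < b → ¬ Set.Ioo a b ⊆ f '' A := by
  classical
  set E := EuclideanSpace ℝ (Fin n) with hE
  let D : Type := {S : Set E // MeasurableSet S ∧ volume S = 0} × C(E, ℝ) × {p : ℝ × ℝ // p.1 < p.2}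
  have hD : Cardinal.mk D ≤ Cardinal.continuum := by
    have h1 : Cardinal.mk {S : Set E // MeasurableSet S ∧ volume S = 0} ≤ Cardinal.continuum := by
      obtain ⟨b, hbc, hb⟩ :=
        (inferInstance : MeasurableSpace.CountablyGenerated E).isCountablyGenerated
      have h := MeasurableSpace.cardinal_measurableSet_le_continuum (s := b)
        (hbc.le_aleph0.trans Cardinal.aleph0_le_continuum)
      rw [← hb] at h
      exact (Cardinal.mk_subtype_mono (fun S hS => hS.1)).trans h
    have h2 : Cardinal.mk C(E, ℝ) ≤ Cardinal.continuum := by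
      have hinj : Function.Injective
          (fun (f : C(E, ℝ)) (k : ℕ) => f (TopologicalSpace.denseSeq E k)) := by
        intro f g hfg
        apply ContinuousMap.coe_injective
        exact (TopologicalSpace.denseRange_denseSeq E).equalizer f.continuous g.continuous hfg
      refine (Cardinal.mk_le_of_injective hinj).trans ?_
      simp [Cardinal.mk_real]
    have h3 : Cardinal.mk {p : ℝ × ℝ // p.1 < p.2} ≤ Cardinal.continuum := by
      refine (Cardinal.mk_subtype_le _).trans ?_
      simp [Cardinal.mk_real]
    simp only [D, Cardinal.mk_prod, Cardinal.lift_id]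
    calc _ ≤ Cardinal.continuum * (Cardinal.continuum * Cardinal.continuum) := by gcongr
      _ = _ := by simp
  let T : Type := Cardinal.continuum.{0}.ord.ToType
  have hT : Cardinal.mk T = Cardinal.continuum := Cardinal.mk_ord_toType _
  have hIio : ∀ α : T, Cardinal.mk (Set.Iio α) < Cardinal.continuum := fun α =>
    Cardinal.mk_Iio_toType_ord_lt α
  have : Nonempty D := ⟨⟨∅, by simp⟩, 0, ⟨(0, 1), by simp⟩⟩
  obtain ⟨e⟩ : Nonempty (D ↪ T) := by
    rw [← hT] at hD
    exact hD
  let d : T → D := Function.invFun e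
  have hd : Function.Surjective d := Function.invFun_surjective e.injective
  let P : ∀ α : T, (∀ β : T, β < α → ℝ × E) → ℝ × E → Prop := fun α g p =>
    volume ((d α).2.1 ⁻¹' {p.1}) = 0 ∧ p.1 ∈ Set.Ioo (d α).2.2.1.1 (d α).2.2.1.2 ∧
    (∀ β hβ, (d α).2.1 (g β hβ).2 ≠ p.1) ∧ p.2 ∉ (d α).1.1 ∧ (d α).2.1 p.2 ≠ p.1 ∧
    ∀ β hβ, volume ((d β).2.1 ⁻¹' {(g β hβ).1}) = 0 → (d β).2.1 p.2 ≠ (g β hβ).1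
  have hP : ∀ α g, ∃ p, P α g p := by
    intro α g
    rcases hdα : d α with ⟨⟨N, hNm, hN⟩, f, ⟨⟨a, b⟩, hab⟩⟩
    have hc : Set.Countable {y : ℝ | 0 < volume (f ⁻¹' {y})} :=
      Measure.countable_meas_level_set_pos f.continuous.measurable
    let B : Set ℝ := Set.range (fun β : Set.Iio α => f (g β.1 β.2).2)
    have hB : Cardinal.mk B < Cardinal.continuum := Cardinal.mk_range_le.trans_lt (hIio α)
    have hy : ∃ y ∈ Set.Ioo a b, y ∉ {y : ℝ | 0 < volume (f ⁻¹' {y})} ∪ B := by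
      by_contra! hcon
      have h1 : Cardinal.mk (Set.Ioo a b) ≤
          Cardinal.mk ({y : ℝ | 0 < volume (f ⁻¹' {y})} ∪ B : Set ℝ) :=
        Cardinal.mk_le_mk_of_subset hcon
      rw [Cardinal.mk_Ioo_real hab] at h1
      have h2 := h1.trans (Cardinal.mk_union_le _ _)
      exact absurd h2 (not_le.2 (Cardinal.add_lt_of_lt Cardinal.aleph0_le_continuum
        (hc.le_aleph0.trans_lt Cardinal.aleph0_lt_continuum) hB))
    obtain ⟨y, hyI, hyn⟩ := hy
    simp only [Set.mem_union, not_or, Set.mem_setOf_eq, not_lt, nonpos_iff_eq_zero] at hyn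
    let I : Type := {β : Set.Iio α // volume ((d β.1).2.1 ⁻¹' {(g β.1 β.2).1}) = 0}
    have hx := hstar I (fun β => (d β.1.1).2.1 ⁻¹' {(g β.1.1 β.1.2).1}) (N ∪ f ⁻¹' {y})
      ((Cardinal.mk_subtype_le _).trans_lt (hIio α))
      (fun β => ⟨isClosed_singleton.preimage (d β.1.1).2.1.continuous, β.2⟩)
      (measure_union_null hN hyn.1)
    obtain ⟨x, hx⟩ := (Set.ne_univ_iff_exists_notMem _).1 hx
    simp only [Set.mem_union, not_or, Set.mem_iUnion, not_exists] at hx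
    refine ⟨(y, x), ?_⟩
    simp only [P, hdα]
    refine ⟨hyn.1, hyI, fun β hβ h => hyn.2 ⟨⟨β, hβ⟩, h⟩, hx.1.1, fun h => hx.1.2 h,
      fun β hβ h0 h => hx.2 ⟨⟨β, hβ⟩, h0⟩ h⟩
  choose G hG using hP
  let p : T → ℝ × E := (wellFounded_lt (α := T)).fix G
  have hp : ∀ α, P α (fun β _ => p β) (p α) := by
    intro α
    have : p α = G α (fun β _ => p β) := WellFounded.fix_eq _ _ _
    rw [this]
    exact hG _ _
  refine ⟨Set.range fun α => (p α).2, ?_, ?_⟩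
  · intro h0
    obtain ⟨α, hα⟩ := hd ⟨⟨toMeasurable volume (Set.range fun α => (p α).2),
      measurableSet_toMeasurable _ _, by rw [measure_toMeasurable, h0]⟩, 0, ⟨(0, 1), by simp⟩⟩
    have := (hp α).2.2.2.1
    rw [hα] at this
    exact this (subset_toMeasurable _ _ ⟨α, rfl⟩)
  · intro f hf a b hab hsub
    obtain ⟨α, hα⟩ := hd ⟨⟨∅, by simp⟩, ⟨f, hf⟩, ⟨(a, b), hab⟩⟩
    obtain ⟨h1, h2, h3, h4, h5, h6⟩ := hp α
    have hmem : (p α).1 ∈ Set.Ioo a b := by simpa [hα] using h2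
    obtain ⟨_, ⟨γ, rfl⟩, hγ⟩ := hsub hmem
    have hγ' : (d α).2.1 (p γ).2 = (p α).1 := by rw [hα]; exact hγ
    rcases lt_trichotomy γ α with h | h | h
    · exact h3 γ h hγ'
    · subst h
      exact h5 hγ'
    · exact (hp γ).2.2.2.2.2 α h h1 hγ'
end

section
/- Fix a positive integer n and assume hypothesis (⋆): for every index set I of cardinality less than 𝔠, every family (F_i)_{i∈I} of closed Lebesgue-null subsets of ℝ^n, and every Lebesgue-null set N ⊆ ℝ^n, the union N ∪ ⋃_{i∈I} F_i is not all of ℝ^n. Then there exists a set A ⊆ ℝ^n of positive Lebesgue outer measure (hence of Hausdorff dimension n) such that for every subset B ⊆ A, every function f : ℝ^n → ℝ uniformly continuous on B, and every a < b, f(B) ≠ [a,b]. -/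
open MeasureTheory
open scoped ENNReal

lemma aux_dimH (n : ℕ) (A : Set (EuclideanSpace ℝ (Fin n))) (hA : 0 < volume A) :
    dimH A = n := by
  apply le_antisymm
  · calc dimH A ≤ dimH (Set.univ : Set (EuclideanSpace ℝ (Fin n))) := dimH_mono (Set.subset_univ _)
      _ = n := by rw [Real.dimH_univ_eq_finrank]; simp
  · have h : (Measure.hausdorffMeasure ((n : NNReal) : ℝ) : Measure (EuclideanSpace ℝ (Fin n))) A
        ≠ 0 := by
      intro h0
      rw [← EuclideanSpace.euclideanHausdorffMeasure_eq_volume,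
        Measure.euclideanHausdorffMeasure_def, Measure.smul_apply] at hA
      simp only [NNReal.coe_natCast] at h0
      rw [h0] at hA
      simp at hA
    simpa using le_dimH_of_hausdorffMeasure_ne_zero h

lemma aux_card_meas (X : Type) [TopologicalSpace X] [SecondCountableTopology X]
    [MeasurableSpace X] [BorelSpace X] :
    Cardinal.mk {s : Set X // MeasurableSet s} ≤ Cardinal.continuum := by
  have h := MeasurableSpace.cardinal_measurableSet_le_continuum
    (s := TopologicalSpace.countableBasis X)
    (((TopologicalSpace.countable_countableBasis X).le_aleph0).trans
      Cardinal.aleph0_le_continuum)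
  have e : (‹MeasurableSpace X›) =
      MeasurableSpace.generateFrom (TopologicalSpace.countableBasis X) := by
    rw [BorelSpace.measurable_eq (α := X)]
    exact (TopologicalSpace.isBasis_countableBasis X).borel_eq_generateFrom
  subst e
  exact h

/-- the closure of the graph of a uniformly continuous function is functional -/
lemma aux_functional {E : Type} [PseudoMetricSpace E] (B : Set E) (f : E → ℝ)
    (hf : UniformContinuousOn f B) (x : E) (y y' : ℝ)
    (h : (x, y) ∈ closure ((fun x => (x, f x)) '' B))
    (h' : (x, y') ∈ closure ((fun x => (x, f x)) '' B)) : y = y' := by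
  apply eq_of_forall_dist_le
  intro ε hε
  rw [Metric.uniformContinuousOn_iff] at hf
  obtain ⟨δ, hδ, H⟩ := hf (ε / 3) (by positivity)
  rw [Metric.mem_closure_iff] at h h'
  obtain ⟨_, ⟨u, hu, rfl⟩, h1⟩ := h (min (δ / 2) (ε / 3)) (by positivity)
  obtain ⟨_, ⟨v, hv, rfl⟩, h2⟩ := h' (min (δ / 2) (ε / 3)) (by positivity)
  rw [Prod.dist_eq] at h1 h2
  simp only [max_lt_iff, lt_min_iff] at h1 h2
  have h3 : dist u v < δ := by
    have := dist_triangle_left u v x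
    linarith [h1.1.1, h2.1.1]
  have h4 := H u hu v hv h3
  have h5 := dist_triangle4_right y y' (f u) (f v)
  linarith [h1.2.2, h2.2.2]

/-- choosing the value to be avoided -/
lemma aux_choose_y {E : Type} [TopologicalSpace E] [MeasurableSpace E] [BorelSpace E]
    (μ : Measure E) [SFinite μ] (K : Set (E × ℝ)) (hK : IsClosed K)
    (hfun : ∀ x y y', (x, y) ∈ K → (x, y') ∈ K → y = y') (a b : ℝ) (hab : a < b)
    (I : Type) (hI : Cardinal.mk I < Cardinal.continuum) (x : I → E) :
    ∃ y ∈ Set.Icc a b, IsClosed {z | (z, y) ∈ K} ∧ μ {z | (z, y) ∈ K} = 0 ∧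
      ∀ i, (x i, y) ∉ K := by
  have hcl : ∀ y, IsClosed {z | (z, y) ∈ K} := fun y =>
    hK.preimage (by fun_prop : Continuous fun z : E => (z, y))
  have hcount : Set.Countable {y : ℝ | 0 < μ {z | (z, y) ∈ K}} := by
    apply Measure.countable_meas_pos_of_disjoint_iUnion (fun y => (hcl y).measurableSet)
    intro y y' hyy
    rw [Function.onFun, Set.disjoint_left]
    intro z hz hz'
    exact hyy (hfun z y y' hz hz')
  set S2 : Set ℝ := {y | ∃ i, (x i, y) ∈ K} with hS2
  have hc2 : Cardinal.mk S2 ≤ Cardinal.mk I := by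
    choose g hg using fun y : S2 => y.2
    refine Cardinal.mk_le_of_injective (f := g) ?_
    intro y y' h
    apply Subtype.ext
    have h1 := hg y
    rw [h] at h1
    exact hfun _ _ _ h1 (hg y')
  by_contra hcon
  push Not at hcon
  have hsub : Set.Icc a b ⊆ {y : ℝ | 0 < μ {z | (z, y) ∈ K}} ∪ S2 := by
    intro y hy
    by_cases h0 : μ {z | (z, y) ∈ K} = 0
    · exact Or.inr (hcon y hy (hcl y) h0)
    · exact Or.inl (pos_iff_ne_zero.2 h0)
  have h1 := (Cardinal.mk_le_mk_of_subset hsub).trans (Cardinal.mk_union_le _ _)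
  rw [Cardinal.mk_Icc_real hab] at h1
  refine absurd h1 (not_le.2 (Cardinal.add_lt_of_lt Cardinal.aleph0_le_continuum ?_
    (hc2.trans_lt hI)))
  exact (Cardinal.le_aleph0_iff_set_countable.2 hcount).trans_lt Cardinal.aleph0_lt_continuum

/-- transfinite recursion on a well-founded order with step property -/
lemma aux_rec {T V : Type} [Preorder T] [WellFoundedLT T]
    (P : ∀ t : T, (Set.Iio t → V) → V → Prop)
    (h : ∀ t g, ∃ v, P t g v) : ∃ F : T → V, ∀ t, P t (fun k => F k) (F t) := by
  choose c hc using h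
  let F : T → V := WellFounded.fix (wellFounded_lt (α := T)) (fun t ih => c t fun k => ih k.1 k.2)
  refine ⟨F, fun t => ?_⟩
  have : F t = c t fun k => F k := WellFounded.fix_eq _ _ _
  rw [this]
  exact hc _ _

/-- Fix a positive integer `n` and assume hypothesis (⋆): fewer than continuum
many closed Lebesgue-null subsets of `ℝ^n` together with one Lebesgue-null set cannot cover
`ℝ^n`. Then there exists a set `A ⊆ ℝ^n` of positive Lebesgue outer measure (hence of Hausdorff
dimension `n`) such that for every subset `B ⊆ A`, every function `f : ℝ^n → ℝ` uniformly
continuous on `B`, and every `a < b`, `f(B) ≠ [a,b]`. -/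
theorem star_imp_exists_nonNull_set_no_subset_uniformlyContinuousOn_onto_interval
    (n : ℕ) (hn : 0 < n)
    (hstar : ∀ (I : Type) (F : I → Set (EuclideanSpace ℝ (Fin n)))
        (N : Set (EuclideanSpace ℝ (Fin n))),
      Cardinal.mk I < Cardinal.continuum →
      (∀ i, IsClosed (F i) ∧ volume (F i) = 0) →
      volume N = 0 →
      N ∪ ⋃ i, F i ≠ Set.univ) :
    ∃ A : Set (EuclideanSpace ℝ (Fin n)),
      0 < volume A ∧
      dimH A = n ∧
      ∀ B ⊆ A, ∀ f : EuclideanSpace ℝ (Fin n) → ℝ, UniformContinuousOn f B →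
        ∀ a b : ℝ, a < b → f '' B ≠ Set.Icc a b := by
  classical
  let E := EuclideanSpace ℝ (Fin n)
  let J := {s : Set E // MeasurableSet s} × {s : Set (E × ℝ) // MeasurableSet s} × ℝ × ℝ
  have hJ : Cardinal.mk J ≤ Cardinal.continuum := by
    simp only [J, Cardinal.mk_prod, Cardinal.lift_id, Cardinal.mk_real]
    have h1 := aux_card_meas E
    have h2 := aux_card_meas (E × ℝ)
    calc _ ≤ Cardinal.continuum * (Cardinal.continuum * (Cardinal.continuum * Cardinal.continuum)) := by
          gcongr
      _ = _ := by simp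
  let T : Type := Cardinal.continuum.{0}.ord.ToType
  have hT : Cardinal.mk T = Cardinal.continuum := Cardinal.mk_ord_toType _
  have hseg : ∀ t : T, Cardinal.mk (Set.Iio t) < Cardinal.continuum := fun t => by
    have := Cardinal.mk_Iio_lt t (by simp [T])
    rwa [hT] at this
  obtain ⟨e, he⟩ : ∃ e : T → J, Function.Surjective e := by
    rw [← hT] at hJ
    obtain ⟨φ⟩ := hJ
    have : Nonempty J := ⟨(⟨∅, MeasurableSet.empty⟩, ⟨∅, MeasurableSet.empty⟩, 0, 0)⟩
    exact ⟨Function.invFun φ, Function.invFun_surjective φ.injective⟩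
  let V := E × {F : Set E // IsClosed F ∧ volume F = 0}
  let good : J → Prop := fun j => IsClosed j.2.1.1 ∧
    (∀ x y y', (x, y) ∈ j.2.1.1 → (x, y') ∈ j.2.1.1 → y = y') ∧ j.2.2.1 < j.2.2.2
  let P : ∀ t : T, (Set.Iio t → V) → V → Prop := fun t g v =>
    (volume (e t).1.1 = 0 → v.1 ∉ (e t).1.1) ∧ v.1 ∉ v.2.1 ∧
    (∀ k, v.1 ∉ (g k).2.1 ∧ (g k).1 ∉ v.2.1) ∧
    (good (e t) → ∃ y ∈ Set.Icc (e t).2.2.1 (e t).2.2.2, v.2.1 = {z | (z, y) ∈ (e t).2.1.1})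
  have hstep : ∀ t g, ∃ v, P t g v := by
    intro t g
    obtain ⟨F, hF1, hF2⟩ : ∃ F : {F : Set E // IsClosed F ∧ volume F = 0},
        (∀ k, (g k).1 ∉ F.1) ∧ (good (e t) → ∃ y ∈ Set.Icc (e t).2.2.1 (e t).2.2.2,
          F.1 = {z | (z, y) ∈ (e t).2.1.1}) := by
      by_cases hg : good (e t)
      · obtain ⟨y, hy, h1, h2, h3⟩ := aux_choose_y (volume : Measure E) (e t).2.1.1 hg.1 hg.2.1
          _ _ hg.2.2 (Set.Iio t) (hseg t) (fun k => (g k).1)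
        exact ⟨⟨_, h1, h2⟩, h3, fun _ => ⟨y, hy, rfl⟩⟩
      · exact ⟨⟨∅, isClosed_empty, measure_empty⟩, fun k => by simp, fun h => absurd h hg⟩
    let N : Set E := if volume (e t).1.1 = 0 then (e t).1.1 else ∅
    have hN : volume N = 0 := by
      by_cases h : volume (e t).1.1 = 0 <;> simp [N, h]
    have := hstar (Set.Iio t) (fun k => (g k).2.1) (N ∪ F.1) (hseg t) (fun k => (g k).2.2)
      (measure_union_null hN F.2.2)
    obtain ⟨x, hx⟩ := (Set.ne_univ_iff_exists_notMem _).1 this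
    simp only [Set.mem_union, Set.mem_iUnion, not_or, not_exists] at hx
    refine ⟨(x, F), fun h => ?_, hx.1.2, fun k => ⟨hx.2 k, hF1 k⟩, hF2⟩
    have := hx.1.1
    simpa [N, h] using this
  obtain ⟨G, hG⟩ := aux_rec P hstep
  have havoid : ∀ s t, (G s).1 ∉ (G t).2.1 := by
    intro s t
    rcases lt_trichotomy s t with h | h | h
    · exact ((hG t).2.2.1 ⟨s, h⟩).2
    · subst h; exact (hG s).2.1
    · exact ((hG s).2.2.1 ⟨t, h⟩).1
  have hpos : 0 < volume (Set.range fun t => (G t).1) := by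
    rw [pos_iff_ne_zero]
    intro h0
    obtain ⟨t, ht⟩ := he (⟨toMeasurable volume (Set.range fun t => (G t).1),
      measurableSet_toMeasurable _ _⟩, ⟨∅, MeasurableSet.empty⟩, 0, 0)
    have h1 := (hG t).1
    rw [ht] at h1
    simp only [measure_toMeasurable] at h1
    exact h1 h0 (subset_toMeasurable _ _ ⟨t, rfl⟩)
  refine ⟨Set.range fun t => (G t).1, hpos, aux_dimH n _ hpos, ?_⟩
  intro B hB f hf a b hab heq
  obtain ⟨t, ht⟩ := he (⟨∅, MeasurableSet.empty⟩,
    ⟨closure ((fun x => (x, f x)) '' B), isClosed_closure.measurableSet⟩, a, b)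
  have h1 := (hG t).2.2.2
  rw [ht] at h1
  obtain ⟨y, hy, hFy⟩ := h1 ⟨isClosed_closure, aux_functional B f hf, hab⟩
  simp only at hy hFy
  rw [← heq] at hy
  obtain ⟨x, hx, rfl⟩ := hy
  obtain ⟨s, rfl⟩ := hB hx
  apply havoid s t
  rw [hFy]
  exact subset_closure ⟨_, hx, rfl⟩
end

section
/- Assume that ℝ cannot be covered by fewer than continuum many meager sets (i.e., for every index set I of cardinality less than 𝔠 and every family (M_i)_{i∈I} of meager subsets of ℝ, ⋃_{i∈I} M_i ≠ ℝ). Then for every positive integer n hypothesis (⋆) holds: for every index set I of cardinality less than 𝔠, every family (F_i)_{i∈I} of closed Lebesgue-null subsets of ℝ^n, and every Lebesgue-null set N ⊆ ℝ^n, the union N ∪ ⋃_{i∈I} F_i is not all of ℝ^n. -/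
open MeasureTheory
open scoped ENNReal

open Set Filter Topology ProbabilityTheory

/-- A weak form of Lusin's theorem. -/
theorem lusin_aux {X : Type*} [TopologicalSpace X] [T2Space X] [MeasurableSpace X] [BorelSpace X]
    (μ : Measure X) [IsFiniteMeasure μ] [μ.InnerRegularCompactLTTop] (f : X → ℝ)
    (hf : Measurable f) (S : Set X) (hS : MeasurableSet S) (hpos : 0 < μ S) :
    ∃ K ⊆ S, IsCompact K ∧ 0 < μ K ∧ ContinuousOn f K := by
  set B := TopologicalSpace.countableBasis ℝ with hB
  have hBc : Countable B := (TopologicalSpace.countable_countableBasis ℝ).to_subtype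
  have hBb : TopologicalSpace.IsTopologicalBasis B := TopologicalSpace.isBasis_countableBasis ℝ
  obtain ⟨ε, hε, hsum⟩ := ENNReal.exists_pos_sum_of_countable' hpos.ne' B
  have hm : ∀ U : B, MeasurableSet (f ⁻¹' (U : Set ℝ)ᶜ) := fun U =>
    hf (hBb.isOpen U.2).measurableSet.compl
  have H : ∀ U : B, ∃ D ⊆ f ⁻¹' (U : Set ℝ)ᶜ, IsCompact D ∧ μ ((f ⁻¹' (U : Set ℝ)ᶜ) \ D) < ε U :=
    fun U => (hm U).exists_isCompact_sdiff_lt (measure_ne_top _ _) (hε U).ne'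
  choose D hD1 hD2 hD3 using H
  set T : Set X := ⋃ U : B, (f ⁻¹' (U : Set ℝ)ᶜ) \ D U with hT
  have hTm : MeasurableSet T :=
    MeasurableSet.iUnion fun U => (hm U).diff (hD2 U).isClosed.measurableSet
  have hTl : μ T < μ S :=
    ((measure_iUnion_le _).trans (ENNReal.tsum_le_tsum fun U => (hD3 U).le)).trans_lt hsum
  have hdiff : 0 < μ (S \ T) := by
    refine lt_of_lt_of_le (tsub_pos_of_lt hTl) (le_measure_sdiff)
  obtain ⟨K, hKS, hK, hKpos⟩ :=
    (hS.diff hTm).exists_lt_isCompact_of_ne_top (measure_ne_top μ _) hdiff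
  refine ⟨K, hKS.trans sdiff_subset, hK, hKpos, ?_⟩
  rw [continuousOn_iff']
  intro t ht
  obtain ⟨A, hA, rfl⟩ := hBb.open_eq_sUnion ht
  refine ⟨⋃ U : B, ⋃ _ : (U : Set ℝ) ∈ A, (D U)ᶜ,
    isOpen_iUnion fun U => isOpen_iUnion fun _ => (hD2 U).isClosed.isOpen_compl, ?_⟩
  ext x
  constructor
  · rintro ⟨⟨U, hU, hx⟩, hxK⟩
    refine ⟨?_, hxK⟩
    simp only [mem_iUnion]
    exact ⟨⟨U, hA hU⟩, hU, fun h => hD1 _ h hx⟩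
  · rintro ⟨hx, hxK⟩
    simp only [mem_iUnion] at hx
    obtain ⟨U, hU, hx⟩ := hx
    refine ⟨⟨U, hU, ?_⟩, hxK⟩
    by_contra hn
    exact (hKS hxK).2 (mem_iUnion.2 ⟨U, hn, hx⟩)

/-- The image of a set under a Stieltjes function has volume at most the Stieltjes measure. -/
theorem stieltjes_image_le (f : StieltjesFunction ℝ) (s : Set ℝ) :
    volume (f '' s) ≤ f.measure s := by
  have h : OuterMeasure.comap f (volume : Measure ℝ).toOuterMeasure ≤ f.outer := by
    refine OuterMeasure.le_ofFunction.2 fun s => ?_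
    rw [StieltjesFunction.length_eq]
    refine le_iInf fun a => le_iInf fun b => le_iInf fun hs => ?_
    have hs' : s ⊆ Ioc a b := fun x hx => hs ⟨hx, fun hb => by
      have := hb (x - 1); linarith⟩
    rw [OuterMeasure.comap_apply]
    calc volume (f '' s) ≤ volume (Icc (f a) (f b)) := by
          apply measure_mono
          rintro _ ⟨x, hx, rfl⟩
          exact ⟨f.mono (hs' hx).1.le, f.mono (hs' hx).2⟩
      _ = _ := Real.volume_Icc
  have h2 := h s
  rw [OuterMeasure.comap_apply] at h2
  rw [StieltjesFunction.measure_def]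
  exact h2

theorem cdf_continuous_aux (ν : Measure ℝ) [IsProbabilityMeasure ν] [NullSingletonClass ν] :
    Continuous (cdf ν) := by
  rw [continuous_iff_continuousAt]
  intro x
  rw [(cdf ν).mono.continuousAt_iff_leftLim_eq_rightLim, StieltjesFunction.rightLim_eq]
  have h := (cdf ν).measure_singleton x
  rw [measure_cdf, measure_singleton] at h
  have h1 := ENNReal.ofReal_eq_zero.1 h.symm
  have h2 := (cdf ν).mono.leftLim_le (le_refl x)
  linarith

/-- The cdf of an atomless measure carried by a compact set maps that set onto `(0,1)`. -/
theorem cdf_surj_aux (ν : Measure ℝ) [IsProbabilityMeasure ν] [NullSingletonClass ν] (C : Set ℝ)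
    (hC : IsCompact C) (hν : ν Cᶜ = 0) : Ioo (0 : ℝ) 1 ⊆ cdf ν '' C := by
  intro t ht
  have hc := cdf_continuous_aux ν
  obtain ⟨x, hx⟩ : t ∈ range (cdf ν) := by
    refine mem_range_of_exists_le_of_exists_ge hc ?_ ?_
    · obtain ⟨a, ha⟩ := ((tendsto_cdf_atBot ν).eventually (gt_mem_nhds ht.1)).exists
      exact ⟨a, ha.le⟩
    · obtain ⟨a, ha⟩ := ((tendsto_cdf_atTop ν).eventually (lt_mem_nhds ht.2)).exists
      exact ⟨a, ha.le⟩
  have hne : (C ∩ Iic x).Nonempty := by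
    by_contra hn
    rw [not_nonempty_iff_eq_empty] at hn
    have h0 : ν (Iic x) = 0 := measure_mono_null (t := Cᶜ)
      (fun y hy hyC => by
        have : y ∈ C ∩ Iic x := ⟨hyC, hy⟩
        rw [hn] at this
        exact this) hν
    rw [← ofReal_cdf, hx, ENNReal.ofReal_eq_zero] at h0
    linarith [ht.1]
  obtain ⟨y, hy⟩ := (hC.inter_right isClosed_Iic).exists_isGreatest hne
  refine ⟨y, hy.1.1, ?_⟩
  have h0 : ν (Ioc y x) = 0 := measure_mono_null (t := Cᶜ)
      (fun z hz hzC => absurd (hy.2 ⟨hzC, hz.2⟩) (not_le.2 hz.1)) hν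
  have h1 := (cdf ν).measure_Ioc y x
  rw [measure_cdf, h0] at h1
  have h2 := ENNReal.ofReal_eq_zero.1 h1.symm
  have h3 := (cdf ν).mono hy.1.2
  linarith

/-- Assume that `ℝ` cannot be covered by fewer than continuum many meager sets
(`cov(M) = 𝔠`). Then for every positive integer `n` hypothesis (⋆) holds: fewer than continuum
many closed Lebesgue-null subsets of `ℝ^n` together with one Lebesgue-null set cannot cover
`ℝ^n`. -/
theorem covMeager_eq_continuum_imp_star
    (hcov : ∀ (I : Type) (M : I → Set ℝ),
      Cardinal.mk I < Cardinal.continuum → (∀ i, IsMeagre (M i)) →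
      (⋃ i, M i) ≠ Set.univ) :
    ∀ (n : ℕ), 0 < n →
      ∀ (I : Type) (F : I → Set (EuclideanSpace ℝ (Fin n)))
        (N : Set (EuclideanSpace ℝ (Fin n))),
        Cardinal.mk I < Cardinal.continuum →
        (∀ i, IsClosed (F i) ∧ volume (F i) = 0) →
        volume N = 0 →
        N ∪ ⋃ i, F i ≠ Set.univ := by
  intro n hn I F N hI hF hN hU
  have : Nonempty (Fin n) := ⟨⟨0, hn⟩⟩
  let E := EuclideanSpace ℝ (Fin n)
  have : Nontrivial E := inferInstance
  set e : E → ℝ := embeddingReal E with he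
  have hemb : MeasurableEmbedding e := measurableEmbedding_embeddingReal E
  -- a compact set of positive measure avoiding `N`, on which `e` is continuous
  obtain ⟨K, hKN, hK, hKpos, hcont⟩ : ∃ K ⊆ Nᶜ, IsCompact K ∧ volume K ≠ 0 ∧ ContinuousOn e K := by
    set μ : Measure E := volume.restrict (Metric.closedBall 0 1) with hμ
    have : IsFiniteMeasure μ := ⟨by
      rw [hμ, Measure.restrict_apply_univ]; exact measure_closedBall_lt_top⟩
    have hN' : volume (toMeasurable volume N) = 0 := by rw [measure_toMeasurable, hN]
    have hμN : μ (toMeasurable volume N) = 0 := Measure.restrict_le_self.absolutelyContinuous hN'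
    have hpos : 0 < μ (toMeasurable volume N)ᶜ := by
      rw [measure_compl (measurableSet_toMeasurable _ _) (measure_ne_top _ _), hμN, tsub_zero, hμ,
        Measure.restrict_apply_univ]
      exact Metric.measure_closedBall_pos _ _ one_pos
    obtain ⟨K, h1, h2, h3, h4⟩ := lusin_aux μ e hemb.measurable _
      (measurableSet_toMeasurable volume N).compl hpos
    exact ⟨K, h1.trans (compl_subset_compl.2 (subset_toMeasurable _ _)), h2,
      (h3.trans_le (Measure.restrict_apply_le _ _)).ne', h4⟩
  set P : Measure E := cond volume K with hP
  have : IsProbabilityMeasure P := cond_isProbabilityMeasure_of_finite hKpos hK.measure_ne_top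
  have hPac : P ≪ volume := cond_absolutelyContinuous
  set ν : Measure ℝ := P.map e with hν
  have : IsProbabilityMeasure ν := Measure.isProbabilityMeasure_map hemb.measurable.aemeasurable
  have hnull : ∀ A : Set E, volume A = 0 → ν (e '' A) = 0 := by
    intro A hA
    rw [hν, hemb.map_apply, preimage_image_eq _ hemb.injective]
    exact hPac hA
  have : NullSingletonClass ν := ⟨fun x => by
    rw [hν, hemb.map_apply]
    exact hPac (Set.Subsingleton.measure_zero
      (fun a ha b hb => hemb.injective (ha.trans hb.symm)) _)⟩
  have hνC : ν (e '' K)ᶜ = 0 := by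
    rw [hν, hemb.map_apply, preimage_compl, preimage_image_eq _ hemb.injective, hP,
      cond_apply hK.measurableSet]
    simp
  have hsurj := cdf_surj_aux ν (e '' K) (hK.image_of_continuousOn hcont) hνC
  set G : I → Set ℝ := fun i => cdf ν '' (e '' (F i ∩ K)) with hG
  have hGc : ∀ i, IsClosed (G i) := fun i =>
    (((hK.inter_left (hF i).1).image_of_continuousOn (hcont.mono inter_subset_right)).image
      (cdf_continuous_aux ν)).isClosed
  have hG0 : ∀ i, volume (G i) = 0 := fun i => by
    have h := stieltjes_image_le (cdf ν) (e '' (F i ∩ K))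
    rw [measure_cdf, hnull _ (measure_mono_null inter_subset_left (hF i).2)] at h
    exact le_antisymm h zero_le
  refine hcov (I × ℚ) (fun p => (fun x : ℝ => x - (p.2 : ℝ)) ⁻¹' G p.1) ?_ ?_ ?_
  · rw [Cardinal.mk_prod, Cardinal.lift_id, Cardinal.lift_id]
    exact Cardinal.mul_lt_of_lt Cardinal.aleph0_le_continuum hI
      (by rw [Cardinal.mkRat]; exact Cardinal.aleph0_lt_continuum)
  · rintro ⟨i, q⟩
    apply IsNowhereDense.isMeagre
    have hcl : IsClosed ((fun x : ℝ => x - (q : ℝ)) ⁻¹' G i) :=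
      (hGc i).preimage (continuous_id.sub continuous_const)
    refine hcl.isNowhereDense_iff.2 (Measure.interior_eq_empty_of_null (μ := volume) ?_)
    simp only [sub_eq_add_neg]
    rw [measure_preimage_add_right]
    exact hG0 i
  · refine eq_univ_of_forall fun x => ?_
    obtain ⟨q, hq1, hq2⟩ := exists_rat_btwn (sub_one_lt x)
    obtain ⟨_, ⟨k, hk, rfl⟩, hky⟩ := hsurj (show x - (q : ℝ) ∈ Ioo (0 : ℝ) 1 from
      ⟨by linarith, by linarith⟩)
    have hkU : k ∈ N ∪ ⋃ i, F i := hU ▸ mem_univ k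
    rcases hkU with h | h
    · exact absurd h (hKN hk)
    · obtain ⟨i, hi⟩ := mem_iUnion.1 h
      exact mem_iUnion.2 ⟨(i, q), ⟨e k, ⟨k, ⟨hi, hk⟩, rfl⟩, hky⟩⟩
end

section
/- For every gauge function φ (a strictly increasing bijection φ : [0,∞) → [0,∞)) there exists a separable metric space (X,d) whose cardinality equals cov(M) and whose φ-Hausdorff measure is positive: H^φ(X) > 0. -/
open MeasureTheory
open scoped ENNReal NNReal

/-- `cov(M)`: the least cardinality of a family of meager subsets of `ℝ` whose union is `ℝ`. -/
noncomputable def covMeager : Cardinal :=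
  sInf {c : Cardinal | ∃ (I : Type) (M : I → Set ℝ),
    Cardinal.mk I = c ∧ (∀ i, IsMeagre (M i)) ∧ (⋃ i, M i) = Set.univ}

/-- Every `I`-indexed family of functions is met at least once by a single function. -/
def GuessAll (I : Type) : Prop :=
  ∀ f : I → ℕ → ℕ, ∃ g : ℕ → ℕ, ∀ i, ∃ n, f i n = g n

theorem GuessAll.gen {I : Type} (h : GuessAll I) {β : Type} [Encodable β] [Inhabited β]
    (f : I → ℕ → β) : ∃ g : ℕ → β, ∀ i, ∃ n, f i n = g n := by
  obtain ⟨g, hg⟩ := h (fun i n => Encodable.encode (f i n))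
  refine ⟨fun n => (Encodable.decode (g n)).getD default, fun i => ?_⟩
  obtain ⟨n, hn⟩ := hg i
  exact ⟨n, by simp [← hn]⟩

theorem GuessAll.equiv {I I' : Type} (h : GuessAll I) (e : I ≃ I') : GuessAll I' := by
  intro f
  obtain ⟨g, hg⟩ := h (fun i => f (e i))
  exact ⟨g, fun i => by simpa using hg (e.symm i)⟩

/-- Guessing on prescribed infinite sets. -/
theorem GuessAll.on {I : Type} (h : GuessAll I) {β : Type} [Encodable β] [Inhabited β]
    (f : I → ℕ → β) (X : I → Set ℕ) (hX : ∀ i, (X i).Infinite) :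
    ∃ g : ℕ → β, ∀ i, ∃ n ∈ X i, f i n = g n := by
  classical
  choose D hDX hDc using fun (i : I) (n : ℕ) => (hX i).exists_subset_card_eq (n + 1)
  obtain ⟨S, hS⟩ := h.gen (β := Finset ℕ × List β)
    (fun i n => (D i n, (List.range ((D i n).sup id + 1)).map (f i)))
  let V := {n : ℕ // n + 1 ≤ (S n).1.card}
  have hall : ∀ s : Finset V, s.card ≤ (s.biUnion (fun n => (S n.1).1)).card := by
    intro s
    rcases s.eq_empty_or_nonempty with rfl | hs
    · simp
    · obtain ⟨m, hm, hmax⟩ := s.exists_max_image (fun n => n.1) hs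
      have h1 : s.card ≤ (Finset.range (m.1 + 1)).card :=
        Finset.card_le_card_of_injOn (fun n => n.1)
          (fun n hn => by simpa [Nat.lt_succ_iff] using hmax n hn)
          (fun a _ b _ hab => Subtype.ext hab)
      rw [Finset.card_range] at h1
      exact h1.trans (m.2.trans (Finset.card_le_card
        (Finset.subset_biUnion_of_mem (fun n : V => (S n.1).1) hm)))
  obtain ⟨k, hk, hkm⟩ := (Finset.all_card_le_biUnion_card_iff_exists_injective _).1 hall
  refine ⟨Function.extend k (fun n => (S n.1).2.getD (k n) default) (fun _ => default), ?_⟩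
  intro i
  obtain ⟨n, hn⟩ := hS i
  have hv : n + 1 ≤ (S n).1.card := by rw [← hn]; simp [hDc]
  have hmem : k ⟨n, hv⟩ ∈ D i n := by
    have := hkm ⟨n, hv⟩
    simpa [← hn] using this
  refine ⟨k ⟨n, hv⟩, hDX i n hmem, ?_⟩
  rw [hk.extend_apply]
  simp only [← hn]
  have hle : k ⟨n, hv⟩ < (D i n).sup id + 1 :=
    Nat.lt_succ_of_le (Finset.le_sup (f := id) hmem)
  rw [List.getD_eq_getElem _ _ (by simpa using hle)]
  simp

/-- The combinatorial core. -/
theorem GuessAll.core {I : Type} (h : GuessAll I) (eI : I ≃ I × ℕ)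
    (K : ℕ → Set ℝ) (hKc : ∀ n, IsCompact (K n)) (hKn : ∀ n, (K n).Nonempty)
    (C : I → Set ℝ) (hC : ∀ i j, ∃ j', K j' ⊆ K j ∧ Disjoint (K j') (C i)) :
    ∃ x, ∀ i, x ∉ C i := by
  classical
  choose e he1 he2 using hC
  let H : I → ℕ → ℕ := fun i m => m + ∑ j ∈ Finset.range m, (e i j + 1)
  have hHle : ∀ i m, m ≤ H i m := fun i m => Nat.le_add_right _ _
  have hHe : ∀ i m j, j < m → e i j < H i m := by
    intro i m j hj
    have : e i j + 1 ≤ ∑ j ∈ Finset.range m, (e i j + 1) :=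
      Finset.single_le_sum (f := fun j => e i j + 1) (fun _ _ => Nat.zero_le _)
        (Finset.mem_range.2 hj)
    simp only [H]
    omega
  have hHm : ∀ i, Monotone (H i) := by
    intro i a b hab
    exact Nat.add_le_add hab (Finset.sum_le_sum_of_subset (Finset.range_mono hab))
  obtain ⟨g, hg⟩ := (h.equiv eI) (fun p n => (H p.1)^[n] p.2)
  let J : ℕ → ℕ := fun n => n + 1 + ∑ k ∈ Finset.range (n + 1), g k
  have hJ : StrictMono J := by
    apply strictMono_nat_of_lt_succ
    intro n
    simp only [J, Finset.sum_range_succ _ (n + 1)]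
    omega
  have hgJ : ∀ n, g n < J n := by
    intro n
    simp only [J, Finset.sum_range_succ _ n]
    omega
  let X : I → Set ℕ := fun i => {n | H i (J n) ≤ J (n + 1)}
  have hX : ∀ i, (X i).Infinite := by
    intro i hfin
    obtain ⟨b, hb⟩ := hfin.bddAbove
    let n0 := b + 1
    have hno : ∀ n, n0 ≤ n → J (n + 1) < H i (J n) := by
      intro n hn
      by_contra hcon
      have : n ≤ b := hb (show n ∈ X i from not_lt.1 hcon)
      omega
    have hit : ∀ n, J n0 ≤ (H i)^[n] (J n0) := by
      intro n
      induction n with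
      | zero => simp
      | succ n ih => rw [Function.iterate_succ_apply']; exact ih.trans (hHle _ _)
    have hit2 : ∀ n, n0 ≤ n → J n ≤ (H i)^[n] (J n0) := by
      intro n hn
      induction n, hn using Nat.le_induction with
      | base => exact hit n0
      | succ n hn ih =>
        rw [Function.iterate_succ_apply']
        exact (hno n hn).le.trans (hHm i ih)
    obtain ⟨n, hn⟩ := hg (i, J n0)
    simp only at hn
    have h3 := hgJ n
    rw [← hn] at h3
    rcases le_total n0 n with h1 | h1
    · exact absurd (hit2 n h1) (not_le.2 h3)
    · exact absurd ((hJ.monotone h1).trans (hit n)) (not_le.2 h3)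
  obtain ⟨G, hG⟩ := h.on (fun i n => (List.range (J n)).map (e i)) X hX
  let P : ℕ → ℕ := fun n => Nat.rec 0 (fun n p =>
    if (G n).getD p 0 < J (n + 1) ∧ K ((G n).getD p 0) ⊆ K p then (G n).getD p 0 else p) n
  have hP : ∀ n, P (n + 1) =
    if (G n).getD (P n) 0 < J (n + 1) ∧ K ((G n).getD (P n) 0) ⊆ K (P n)
      then (G n).getD (P n) 0 else P n := fun n => rfl
  have hPJ : ∀ n, P n < J n := by
    intro n
    induction n with
    | zero => exact Nat.lt_of_lt_of_le Nat.zero_lt_one (by simp only [J]; omega)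
    | succ n ih =>
      rw [hP]
      split_ifs with hc
      · exact hc.1
      · exact ih.trans (hJ (Nat.lt_succ_self n))
  have hPK : ∀ n, K (P (n + 1)) ⊆ K (P n) := by
    intro n
    rw [hP]
    split_ifs with hc
    · exact hc.2
    · exact subset_rfl
  obtain ⟨x, hx⟩ := IsCompact.nonempty_iInter_of_sequence_nonempty_isCompact_isClosed
    (fun n => K (P n)) hPK (fun n => hKn _) (hKc _) (fun n => (hKc _).isClosed)
  rw [Set.mem_iInter] at hx
  refine ⟨x, fun i hxi => ?_⟩
  obtain ⟨n, hnX, hn⟩ := hG i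
  have hval : (G n).getD (P n) 0 = e i (P n) := by
    rw [← hn, List.getD_eq_getElem _ _ (by simpa using hPJ n)]
    simp
  have hPe : P (n + 1) = e i (P n) := by
    rw [hP, if_pos, hval]
    rw [hval]
    exact ⟨(hHe i _ _ (hPJ n)).trans_le hnX, he1 i _⟩
  have := hx (n + 1)
  simp only [hPe] at this
  exact Set.disjoint_left.1 (he2 i (P n)) this hxi

theorem exists_compact_base : ∃ K : ℕ → Set ℝ, (∀ n, IsCompact (K n)) ∧
    (∀ n, (K n).Nonempty) ∧
    ∀ C : Set ℝ, IsClosed C → interior C = ∅ → ∀ j, ∃ j', K j' ⊆ K j ∧ Disjoint (K j') C := by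
  let T := {p : ℚ × ℚ // p.1 < p.2}
  have : Nonempty T := ⟨⟨(0, 1), by norm_num⟩⟩
  obtain ⟨u, hu⟩ := exists_surjective_nat T
  refine ⟨fun n => Set.Icc ((u n).1.1 : ℝ) ((u n).1.2 : ℝ), fun n => isCompact_Icc,
    fun n => Set.nonempty_Icc.2 (by exact_mod_cast (u n).2.le), ?_⟩
  intro C hC hint j
  have hlt : ((u j).1.1 : ℝ) < ((u j).1.2 : ℝ) := by exact_mod_cast (u j).2
  have hopen : IsOpen (Set.Ioo ((u j).1.1 : ℝ) ((u j).1.2 : ℝ) \ C) := isOpen_Ioo.sdiff hC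
  have hne : (Set.Ioo ((u j).1.1 : ℝ) ((u j).1.2 : ℝ) \ C).Nonempty := by
    by_contra hcon
    rw [Set.not_nonempty_iff_eq_empty, Set.sdiff_eq_empty] at hcon
    have := interior_maximal hcon isOpen_Ioo
    rw [hint] at this
    obtain ⟨y, hy⟩ := Set.nonempty_Ioo.2 hlt
    exact this hy
  obtain ⟨y, hy⟩ := hne
  obtain ⟨ε, hε, hball⟩ := Metric.isOpen_iff.1 hopen y hy
  obtain ⟨a, ha1, ha2⟩ := exists_rat_btwn (show y - ε < y by linarith)
  obtain ⟨b, hb1, hb2⟩ := exists_rat_btwn (show y < y + ε by linarith)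
  obtain ⟨j', hj'⟩ := hu ⟨(a, b), by exact_mod_cast ha2.trans hb1⟩
  have hsub : Set.Icc (a : ℝ) b ⊆ Set.Ioo ((u j).1.1 : ℝ) ((u j).1.2 : ℝ) \ C := by
    intro z hz
    apply hball
    rw [Metric.mem_ball, Real.dist_eq, abs_lt]
    constructor <;> linarith [hz.1, hz.2]
  refine ⟨j', ?_, ?_⟩
  · simp only [hj']
    exact fun z hz => Set.Ioo_subset_Icc_self (hsub hz).1
  · simp only [hj']
    exact Set.disjoint_left.2 fun z hz => (hsub hz).2

theorem not_guessAll {I : Type} [Infinite I] (M : I → Set ℝ) (hM : ∀ i, IsMeagre (M i))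
    (hcov : (⋃ i, M i) = Set.univ) : ¬ GuessAll I := by
  intro h
  have eI : Nonempty (I ≃ I × ℕ) := by
    rw [← Cardinal.eq]
    simp
  obtain ⟨eI⟩ := eI
  have hM' : ∀ i, ∃ F : ℕ → Set ℝ, (∀ n, IsClosed (F n) ∧ interior (F n) = ∅) ∧
      M i ⊆ ⋃ n, F n := by
    intro i
    obtain ⟨S, hS1, hS2, hS3⟩ := isMeagre_iff_countable_union_isNowhereDense.1 (hM i)
    have hc : (insert ∅ S).Countable := hS2.insert _
    obtain ⟨F, hF⟩ := hc.exists_eq_range ⟨∅, Set.mem_insert _ _⟩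
    refine ⟨fun n => closure (F n), fun n => ⟨isClosed_closure, ?_⟩, ?_⟩
    · have : F n ∈ insert ∅ S := by rw [hF]; exact ⟨n, rfl⟩
      rcases this with h0 | h0
      · simp [h0]
      · exact hS1 _ h0
    · intro x hx
      obtain ⟨s, hs, hxs⟩ := hS3 hx
      have : s ∈ Set.range F := by rw [← hF]; exact Set.mem_insert_of_mem _ hs
      obtain ⟨n, rfl⟩ := this
      exact Set.mem_iUnion.2 ⟨n, subset_closure hxs⟩
  choose F hF hMF using hM'
  obtain ⟨K, hK1, hK2, hK3⟩ := exists_compact_base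
  obtain ⟨x, hx⟩ := h.core eI K hK1 hK2 (fun i => F (eI i).1 (eI i).2)
    (fun i j => hK3 _ (hF _ _).1 (hF _ _).2 j)
  have : x ∈ ⋃ i, M i := by rw [hcov]; trivial
  obtain ⟨i, hi⟩ := Set.mem_iUnion.1 this
  obtain ⟨n, hn⟩ := Set.mem_iUnion.1 (hMF i hi)
  refine hx (eI.symm (i, n)) ?_
  simpa using hn

/-- The space: a set `X` of size `covMeager` of functions that is not guessed by one function. -/
theorem exists_unguessed : ∃ (Y : Type) (v : Y → ℕ → ℕ), Function.Injective v ∧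
    Cardinal.mk Y = covMeager ∧ ∀ g : ℕ → ℕ, ∃ y, ∀ n, v y n ≠ g n := by
  have hmem : covMeager ∈ {c : Cardinal | ∃ (I : Type) (M : I → Set ℝ),
    Cardinal.mk I = c ∧ (∀ i, IsMeagre (M i)) ∧ (⋃ i, M i) = Set.univ} := by
    apply csInf_mem
    refine ⟨_, ℝ, fun x => {x}, rfl, fun x => ?_, Set.iUnion_of_singleton ℝ⟩
    exact IsNowhereDense.isMeagre (by simp [IsNowhereDense])
  have hle : covMeager ≤ Cardinal.continuum := by
    apply csInf_le'
    refine ⟨ℝ, fun x => {x}, Cardinal.mk_real, fun x => ?_, Set.iUnion_of_singleton ℝ⟩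
    exact IsNowhereDense.isMeagre (by simp [IsNowhereDense])
  obtain ⟨I, M, hI, hM, hcov⟩ := hmem
  have hinf : Infinite I := by
    by_contra hfin
    rw [not_infinite_iff_finite] at hfin
    have : IsMeagre (⋃ i, M i) := isMeagre_iUnion hM
    rw [hcov] at this
    exact not_isMeagre_of_isOpen isOpen_univ Set.univ_nonempty this
  have hng := not_guessAll M hM hcov
  unfold GuessAll at hng
  push Not at hng
  obtain ⟨f, hf⟩ := hng
  have hle2 : covMeager ≤ Cardinal.mk (ℕ → ℕ) := by
    simpa using hle
  obtain ⟨T, hT⟩ := Cardinal.le_mk_iff_exists_set.1 hle2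
  have hal : Cardinal.aleph0 ≤ covMeager := by rw [← hI]; exact Cardinal.aleph0_le_mk I
  refine ⟨(T ∪ Set.range f : Set (ℕ → ℕ)), Subtype.val, Subtype.val_injective, le_antisymm ?_ ?_, fun g => ?_⟩
  · refine (Cardinal.mk_union_le _ _).trans ?_
    refine Cardinal.add_le_of_le hal hT.le ?_
    rw [← hI]
    exact Cardinal.mk_range_le
  · rw [← hT]
    exact Cardinal.mk_le_mk_of_subset Set.subset_union_left
  · obtain ⟨i, hi⟩ := hf g
    exact ⟨⟨f i, Or.inr ⟨i, rfl⟩⟩, hi⟩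

open Classical in
/-- Distance with prescribed scale. -/
noncomputable def scaleDist (δ : ℕ → ℝ) (x y : ℕ → ℕ) : ℝ :=
  if x = y then 0 else δ (PiNat.firstDiff x y)

/-- The metric on a family of sequences. -/
@[reducible]
noncomputable def scaleMetric (δ : ℕ → ℝ) (hpos : ∀ n, 0 < δ n) (hanti : Antitone δ)
    {Y : Type} (v : Y → ℕ → ℕ) (hv : Function.Injective v) : MetricSpace Y where
  dist x y := scaleDist δ (v x) (v y)
  dist_self x := by simp [scaleDist]
  dist_comm x y := by
    simp only [scaleDist, PiNat.firstDiff_comm (v x) (v y)]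
    by_cases h : v x = v y
    · rw [if_pos h, if_pos h.symm]
    · rw [if_neg h, if_neg (Ne.symm h)]
  dist_triangle x y z := by
    simp only [scaleDist]
    by_cases hxz : (v x) = (v z)
    · rw [if_pos hxz]
      split_ifs <;> simp [add_nonneg, (hpos _).le]
    by_cases hxy : (v x) = (v y)
    · rw [hxy, if_pos rfl, zero_add]
    by_cases hyz : (v y) = (v z)
    · rw [hyz, if_pos rfl, add_zero]
    rw [if_neg hxz, if_neg hxy, if_neg hyz]
    have h1 := hanti (PiNat.min_firstDiff_le (v x) (v y) (v z) hxz)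
    have h2 := hpos (PiNat.firstDiff (v x) (v y))
    have h3 := hpos (PiNat.firstDiff (v y) (v z))
    rcases min_choice (PiNat.firstDiff (v x) (v y)) (PiNat.firstDiff (v y) (v z)) with h | h <;>
      rw [h] at h1 <;> linarith
  eq_of_dist_eq_zero {x y} h := by
    simp only [scaleDist] at h
    split_ifs at h with hxy
    · exact hv hxy
    · exact absurd h (hpos _).ne'

/-- Hall-type selection. -/
theorem exists_injective_of_tsum_lt (b : ℕ → ℝ≥0∞) (hb : ∀ n, 0 < b n) (hs : ∑' n, b n < 1) :
    ∃ k : ℕ → ℕ, Function.Injective k ∧ ∀ n, b n * ((k n : ℝ≥0∞) + 1) < 1 := by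
  classical
  have hfin : ∀ n, {k : ℕ | b n * ((k : ℝ≥0∞) + 1) < 1}.Finite := by
    intro n
    obtain ⟨N, hN⟩ := ENNReal.exists_nat_mul_gt (hb n).ne' ENNReal.one_ne_top
    refine (Set.finite_lt_nat N).subset fun k hk => ?_
    by_contra hcon
    have hNk : (N : ℝ≥0∞) ≤ k := by exact_mod_cast not_lt.1 hcon
    have : (N : ℝ≥0∞) * b n ≤ b n * ((k : ℝ≥0∞) + 1) := by
      rw [mul_comm]
      gcongr
      exact hNk.trans le_self_add
    exact absurd (hN.trans_le this) (not_lt.2 (le_of_lt hk))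
  have hall : ∀ s : Finset ℕ, s.card ≤ (s.biUnion (fun n => (hfin n).toFinset)).card := by
    intro s
    rcases s.eq_empty_or_nonempty with rfl | hne
    · simp
    · obtain ⟨m, hm, hmin⟩ := s.exists_min_image b hne
      have h1 : (s.card : ℝ≥0∞) * b m < 1 := by
        refine lt_of_le_of_lt ?_ hs
        refine le_trans ?_ (ENNReal.sum_le_tsum s)
        rw [← nsmul_eq_mul]
        exact Finset.card_nsmul_le_sum s b _ hmin
      have h2 : Finset.range s.card ⊆ (hfin m).toFinset := by
        intro k hk
        rw [Finset.mem_range] at hk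
        simp only [Set.Finite.mem_toFinset, Set.mem_ofPred_eq]
        refine lt_of_le_of_lt ?_ h1
        rw [mul_comm]
        gcongr
        exact_mod_cast hk
      calc s.card = (Finset.range s.card).card := by simp
        _ ≤ _ := Finset.card_le_card (h2.trans
          (Finset.subset_biUnion_of_mem (fun n => (hfin n).toFinset) hm))
  obtain ⟨k, hk, hkm⟩ := (Finset.all_card_le_biUnion_card_iff_exists_injective _).1 hall
  exact ⟨k, hk, fun n => by simpa using hkm n⟩

theorem exists_separable_card_covMeager_mkMetric_pos
    (φ : ℝ≥0∞ → ℝ≥0∞) (hmono : StrictMono φ) (hbij : Function.Bijective φ) :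
    ∃ (X : Type) (_ : MetricSpace X) (_ : MeasurableSpace X) (_ : BorelSpace X),
      TopologicalSpace.SeparableSpace X ∧
      Cardinal.mk X = covMeager ∧
      0 < Measure.mkMetric φ (Set.univ : Set X) := by
  classical
  obtain ⟨X, v, hv, hXc, hXg⟩ := exists_unguessed
  have hφ0 : φ 0 = 0 := by
    obtain ⟨a, ha⟩ := hbij.2 0
    have h1 : φ 0 ≤ φ a := hmono.monotone zero_le
    rw [ha] at h1
    exact le_antisymm h1 zero_le
  have hφt : φ ⊤ = ⊤ := by
    obtain ⟨a, ha⟩ := hbij.2 ⊤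
    have h1 : φ a ≤ φ ⊤ := hmono.monotone le_top
    rw [ha] at h1
    exact le_antisymm le_top h1
  choose η hη using fun n : ℕ => hbij.2 (((n : ℝ≥0∞) + 1)⁻¹)
  have hηpos : ∀ n, 0 < η n := by
    intro n
    rw [← hmono.lt_iff_lt, hφ0, hη]
    simp
  have hηtop : ∀ n, η n ≠ ⊤ := by
    intro n h
    have := hη n
    rw [h, hφt, eq_comm, ENNReal.inv_eq_top] at this
    exact absurd this (by positivity)
  have hηanti : Antitone η := by
    intro a b hab
    rw [← hmono.le_iff_le, hη, hη]
    gcongr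
  let δ : ℕ → ℝ := fun n => (η n).toReal
  have hδpos : ∀ n, 0 < δ n := fun n => ENNReal.toReal_pos (hηpos n).ne' (hηtop n)
  have hδanti : Antitone δ := fun a b hab => ENNReal.toReal_mono (hηtop a) (hηanti hab)
  let mX : MetricSpace X := scaleMetric δ hδpos hδanti v hv
  let _ : MeasurableSpace X := borel X
  have _ : BorelSpace X := ⟨rfl⟩
  have hdist : ∀ x y : X, dist x y = scaleDist δ (v x) (v y) := fun _ _ => rfl
  refine ⟨X, inferInstance, inferInstance, inferInstance, ?_, hXc, ?_⟩
  · have : SecondCountableTopology X := by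
      apply Metric.secondCountable_of_countable_discretization
      intro ε hε
      have hφε : φ (ENNReal.ofReal ε) ≠ 0 := by
        have := hmono (ENNReal.ofReal_pos.2 hε)
        rw [hφ0] at this
        exact this.ne'
      obtain ⟨N, hN⟩ := ENNReal.exists_inv_nat_lt hφε
      refine ⟨Fin N → ℕ, inferInstance, fun x i => v x i, fun x y hxy => ?_⟩
      rw [hdist, scaleDist]
      split_ifs with heq
      · exact hε.le
      · have hNle : N ≤ PiNat.firstDiff (v x) (v y) := by
          by_contra hcon
          exact PiNat.apply_firstDiff_ne heq (congrFun hxy ⟨_, not_le.1 hcon⟩)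
        refine (hδanti hNle).trans ?_
        apply ENNReal.toReal_le_of_le_ofReal hε.le
        rw [← hmono.le_iff_le, hη]
        refine le_trans ?_ hN.le
        rw [ENNReal.inv_le_inv]
        exact le_self_add
    infer_instance
  · rw [pos_iff_ne_zero]
    intro h0
    rw [Measure.mkMetric_apply] at h0
    simp only [ENNReal.iSup_eq_zero] at h0
    have h1 := h0 1 one_pos
    have h2 : (⨅ (t : ℕ → Set X) (_ : Set.univ ⊆ Set.iUnion t)
        (_ : ∀ n, Metric.ediam (t n) ≤ 1), ∑' n, ⨆ _ : (t n).Nonempty, φ (Metric.ediam (t n)))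
          < 2⁻¹ := by
      rw [h1]; simp
    simp only [iInf_lt_iff] at h2
    obtain ⟨t, htc, -, hts⟩ := h2
    obtain ⟨ε', hε', hsum⟩ := ENNReal.exists_pos_sum_of_countable
      (show (2⁻¹ : ℝ≥0∞) ≠ 0 by simp) ℕ
    obtain ⟨k, hk, hkb⟩ := exists_injective_of_tsum_lt
      (fun n => (⨆ _ : (t n).Nonempty, φ (Metric.ediam (t n))) + ε' n)
      (fun n => lt_of_lt_of_le (ENNReal.coe_pos.2 (hε' n)) le_add_self) (by
        rw [ENNReal.tsum_add]
        calc _ < (2⁻¹ : ℝ≥0∞) + 2⁻¹ := ENNReal.add_lt_add hts hsum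
          _ = 1 := ENNReal.inv_two_add_inv_two)
    obtain ⟨x, hx⟩ := hXg (Function.extend k
      (fun n => if h : (t n).Nonempty then v h.some (k n) else 0) (fun _ => 0))
    obtain ⟨n, hn⟩ := Set.mem_iUnion.1 (htc (Set.mem_univ x))
    have hne : (t n).Nonempty := ⟨_, hn⟩
    apply hx (k n)
    rw [hk.extend_apply, dif_pos hne]
    by_contra hcon
    have hxy : v x ≠ v hne.some := fun h => hcon (by rw [← h])
    have hfd : PiNat.firstDiff (v x) (v hne.some) ≤ k n := by
      by_contra hlt
      exact hcon (PiNat.apply_eq_of_lt_firstDiff (not_le.1 hlt))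
    have hed : η (k n) ≤ Metric.ediam (t n) := by
      refine le_trans ?_ (Metric.edist_le_ediam_of_mem hn hne.some_mem)
      rw [edist_dist, hdist, scaleDist, if_neg hxy]
      rw [ENNReal.ofReal_toReal (hηtop _)]
      exact hηanti hfd
    have hφd := hmono.monotone hed
    rw [hη] at hφd
    have hb := hkb n
    simp only [hne, iSup_pos] at hb
    have : (1 : ℝ≥0∞) ≤ (φ (Metric.ediam (t n)) + ε' n) * ((k n : ℝ≥0∞) + 1) := by
      calc (1 : ℝ≥0∞) = ((k n : ℝ≥0∞) + 1)⁻¹ * ((k n : ℝ≥0∞) + 1) := by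
            rw [ENNReal.inv_mul_cancel] <;> simp
        _ ≤ _ := by
          gcongr
          exact hφd.trans le_self_add
    exact absurd hb (not_lt.2 this)
end

section
/- Let (X,d) be a nonempty compact metric space, let ≤ be a linear order on X, and let C > 0 be a constant such that diam {x : a ≤ x ≤ b} ≤ C · d(a,b) for all a,b ∈ X with a ≤ b. Then (X,≤) has a least element and a greatest element. -/
/-- Let `(X,d)` be a nonempty compact metric space, `≤` a linear order on `X`,
and `C > 0` a constant such that `diam {x : a ≤ x ≤ b} ≤ C * d(a,b)` for all `a ≤ b`. Then
`(X,≤)` has a least element and a greatest element. -/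
theorem compact_monotone_space_exists_min_max
    {X : Type*} [MetricSpace X] [CompactSpace X] [Nonempty X]
    (r : LinearOrder X) (C : ℝ) (hC : 0 < C)
    (hmon : ∀ a b : X, r.le a b → Metric.diam {x | r.le a x ∧ r.le x b} ≤ C * dist a b) :
    (∃ m : X, ∀ x : X, r.le m x) ∧ (∃ M : X, ∀ x : X, r.le x M) := by
  letI := r
  have key : ∀ a b x y : X, a ≤ b → (a ≤ x ∧ x ≤ b) → (a ≤ y ∧ y ≤ b) →
      dist x y ≤ C * dist a b := by
    intro a b x y hab hx hy
    refine le_trans (Metric.dist_le_diam_of_mem ?_ ?_ ?_) (hmon a b hab)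
    · exact isCompact_univ.isBounded.subset (Set.subset_univ _)
    · exact hx
    · exact hy
  have h1 : ∀ b : X, IsClosed (Set.Ici b) := by
    intro b
    rw [← isOpen_compl_iff, Metric.isOpen_iff]
    intro a ha
    have hab : a < b := not_le.mp ha
    refine ⟨dist a b / C, div_pos (dist_pos.mpr hab.ne) hC, ?_⟩
    intro y hy hby
    have hby' : b ≤ y := hby
    have := key a y a b (hab.le.trans hby') ⟨le_rfl, hab.le.trans hby'⟩ ⟨hab.le, hby'⟩
    rw [Metric.mem_ball, lt_div_iff₀ hC, dist_comm] at hy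
    linarith
  have h2 : ∀ b : X, IsClosed (Set.Iic b) := by
    intro b
    rw [← isOpen_compl_iff, Metric.isOpen_iff]
    intro a ha
    have hab : b < a := not_le.mp ha
    refine ⟨dist a b / C, div_pos (dist_pos.mpr hab.ne') hC, ?_⟩
    intro y hy hby
    have hby' : y ≤ b := hby
    have := key y a a b (hby'.trans hab.le) ⟨hby'.trans hab.le, le_rfl⟩ ⟨hby', hab.le⟩
    rw [Metric.mem_ball, lt_div_iff₀ hC] at hy
    linarith
  haveI : ClosedIciTopology X := ⟨h1⟩
  haveI : ClosedIicTopology X := ⟨h2⟩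
  obtain ⟨m, hm⟩ := (isCompact_univ (X := X)).exists_isLeast Set.univ_nonempty
  obtain ⟨M, hM⟩ := (isCompact_univ (X := X)).exists_isGreatest Set.univ_nonempty
  exact ⟨⟨m, fun x => hm.2 (Set.mem_univ x)⟩, ⟨M, fun x => hM.2 (Set.mem_univ x)⟩⟩
end

section
/- Let (X,d) be a compact ultrametric space with diameter D > 0. Then the relation x ~ y defined by d(x,y) < D is an equivalence relation on X with finitely many equivalence classes; each equivalence class is both open and closed; there are at least two classes; and any two points lying in distinct equivalence classes are at distance exactly D from each other. -/
/-- Let `(X,d)` be a compact ultrametric space with diameter `D > 0`. Then the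
relation `x ~ y` defined by `d(x,y) < D` is an equivalence relation on `X` with finitely many
equivalence classes; each equivalence class is both open and closed; there are at least two
classes; and any two points lying in distinct equivalence classes are at distance exactly `D`. -/
theorem compact_ultrametric_diam_equivalence_classes
    {X : Type*} [MetricSpace X] [CompactSpace X] [IsUltrametricDist X]
    (D : ℝ) (hD : D = Metric.diam (Set.univ : Set X)) (hDpos : 0 < D) :
    Equivalence (fun x y : X => dist x y < D) ∧
    (Set.range fun x : X => {y : X | dist x y < D}).Finite ∧
    (∀ x : X, IsOpen {y : X | dist x y < D} ∧ IsClosed {y : X | dist x y < D}) ∧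
    (∃ x y : X, {z : X | dist x z < D} ≠ {z : X | dist y z < D}) ∧
    (∀ x y : X, {z : X | dist x z < D} ≠ {z : X | dist y z < D} → dist x y = D) := by
  have tr : ∀ {x y z : X}, dist x y < D → dist y z < D → dist x z < D := fun {x y z} h1 h2 =>
    lt_of_le_of_lt (dist_triangle_max x y z) (max_lt h1 h2)
  have sy : ∀ {x y : X}, dist x y < D → dist y x < D := fun {x y} h => by rwa [dist_comm]
  have hball : ∀ x : X, {y : X | dist x y < D} = Metric.ball x D := by
    intro x
    ext y
    simp [Metric.mem_ball, dist_comm]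
  have heq : ∀ {x y : X}, dist x y < D → {z : X | dist x z < D} = {z : X | dist y z < D} := by
    intro x y h
    ext z
    exact ⟨fun h' => tr (sy h) h', fun h' => tr h h'⟩
  have hle : ∀ x y : X, dist x y ≤ D := by
    intro x y
    rw [hD]
    exact Metric.dist_le_diam_of_mem isCompact_univ.isBounded (Set.mem_univ x) (Set.mem_univ y)
  refine ⟨⟨fun x => by simpa using hDpos, sy, tr⟩, ?_, ?_, ?_, ?_⟩
  · obtain ⟨t, -, ht, hcov⟩ :=
      Metric.finite_approx_of_totallyBounded (isCompact_univ (X := X)).totallyBounded D hDpos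
    refine (ht.image fun x : X => {y : X | dist x y < D}).subset ?_
    rintro _ ⟨x, rfl⟩
    obtain ⟨y, hy, hxy⟩ := Set.mem_iUnion₂.1 (hcov (Set.mem_univ x))
    exact ⟨y, hy, (heq (Metric.mem_ball.1 hxy)).symm⟩
  · intro x
    rw [hball]
    exact ⟨Metric.isOpen_ball, IsUltrametricDist.isClosed_ball x D⟩
  · by_contra! hall
    have hne : Nonempty X := by
      by_contra hne
      rw [not_nonempty_iff] at hne
      rw [Set.univ_eq_empty_iff.2 hne, Metric.diam_empty] at hD
      exact hDpos.ne' hD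
    obtain ⟨p, -, hp⟩ := (isCompact_univ (X := X × X)).exists_isMaxOn Set.univ_nonempty
      (f := fun p : X × X => dist p.1 p.2) (by fun_prop)
    have h1 : D ≤ dist p.1 p.2 := by
      rw [hD]
      exact Metric.diam_le_of_forall_dist_le dist_nonneg
        fun x _ y _ => hp (Set.mem_univ (x, y))
    have h2 : p.2 ∈ {z : X | dist p.1 z < D} := by
      rw [hall p.1 p.2]
      simpa using hDpos
    exact absurd h2 (not_lt.2 h1)
  · intro x y h
    by_contra hn
    exact h (heq (lt_of_le_of_ne (hle x y) hn))
end
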